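/- Let φ be a quasi-concave function on (0,∞) with lim_{t→0+} t/φ(t) = 0. Then the Marcinkiewicz space M_φ contains a function g with ‖g‖_{M_φ} = 1 and dist(g, (M_φ)_a) = 1; consequently M_φ contains a lattice isometric copy of ℓ∞. -/

import Mathlib

open Filter Topology MeasureTheory Set

/-- A **Banach ideal space** on a measure space `(α, μ)`: a collection of (real-valued)
measurable functions with a complete lattice-compatible norm satisfying the ideal property. -/
structure BanachIdealSpace (α : Type*) [MeasurableSpace α] (μ : Measure α) where
  Mem : (α → ℝ) → Prop
  N : (α → ℝ) → ℝ
  mem_zero : Mem 0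
  mem_add : ∀ f g, Mem f → Mem g → Mem (f + g)
  mem_smul : ∀ (c : ℝ) f, Mem f → Mem (c • f)
  measurable : ∀ f, Mem f → AEMeasurable f μ
  N_nonneg : ∀ f, 0 ≤ N f
  N_zero : N 0 = 0
  N_eq_zero : ∀ f, Mem f → N f = 0 → (∀ᵐ x ∂μ, f x = 0)
  N_add : ∀ f g, Mem f → Mem g → N (f + g) ≤ N f + N g
  N_smul : ∀ (c : ℝ) f, N (c • f) = |c| * N f
  ideal : ∀ f g, AEMeasurable f μ → (∀ᵐ x ∂μ, |f x| ≤ |g x|) → Mem g →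
    Mem f ∧ N f ≤ N g
  complete : ∀ u : ℕ → (α → ℝ), (∀ n, Mem (u n)) →
    (∀ ε : ℝ, 0 < ε → ∃ n₀ : ℕ, ∀ m n, n₀ ≤ m → n₀ ≤ n → N (u m - u n) < ε) →
    ∃ f, Mem f ∧ Tendsto (fun n => N (u n - f)) atTop (𝓝 0)

namespace BanachIdealSpace

variable {α : Type*} [MeasurableSpace α] {μ : Measure α}

/-- Distance (w.r.t. a norm functional `N`) from `f` to a set `S` of functions. -/
noncomputable def distIn (N : (α → ℝ) → ℝ) (f : α → ℝ) (S : Set (α → ℝ)) : ℝ :=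
  sInf ((fun g => N (f - g)) '' S)

/-- The set of **order continuous elements** of a (generalized) function space given by a
membership predicate `Mem` and a norm `N`: those `f` such that every sequence `uₙ` with
`0 ≤ uₙ ≤ |f|` a.e., a.e. non-increasing and converging to `0` a.e., satisfies `N (uₙ) → 0`. -/
def ocSet (μ : Measure α) (Mem : (α → ℝ) → Prop) (N : (α → ℝ) → ℝ) : Set (α → ℝ) :=
  {f | Mem f ∧ ∀ u : ℕ → (α → ℝ), (∀ n, Mem (u n)) →
    (∀ n, ∀ᵐ x ∂μ, 0 ≤ u n x ∧ u n x ≤ |f x|) →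
    (∀ n, ∀ᵐ x ∂μ, u (n + 1) x ≤ u n x) →
    (∀ᵐ x ∂μ, Tendsto (fun n => u n x) atTop (𝓝 0)) →
    Tendsto (fun n => N (u n)) atTop (𝓝 0)}

/-- The ideal `X_a` of order continuous elements of a Banach ideal space `X`. -/
def oc (X : BanachIdealSpace α μ) : Set (α → ℝ) := ocSet μ X.Mem X.N

/-- An **order ideal** of a Banach ideal space: a closed solid linear subspace. -/
structure IsOrderIdeal (X : BanachIdealSpace α μ) (J : Set (α → ℝ)) : Prop where
  subset : ∀ f ∈ J, X.Mem f
  zero : (0 : α → ℝ) ∈ J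
  add : ∀ f g, f ∈ J → g ∈ J → f + g ∈ J
  smul : ∀ (c : ℝ) f, f ∈ J → c • f ∈ J
  solid : ∀ f g, f ∈ J → X.Mem g → (∀ᵐ x ∂μ, |g x| ≤ |f x|) → g ∈ J
  closed : ∀ (u : ℕ → (α → ℝ)) f, (∀ n, u n ∈ J) → X.Mem f →
    Tendsto (fun n => X.N (f - u n)) atTop (𝓝 0) → f ∈ J

/-- The **Fatou property** of a Banach ideal space. -/
def Fatou (X : BanachIdealSpace α μ) : Prop :=
  ∀ (u : ℕ → (α → ℝ)) (f : α → ℝ), (∀ n, X.Mem (u n)) → AEMeasurable f μ →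
    (∀ᵐ x ∂μ, 0 ≤ u 0 x) → (∀ᵐ x ∂μ, Monotone fun n => u n x) →
    (∀ᵐ x ∂μ, Tendsto (fun n => u n x) atTop (𝓝 (f x))) →
    BddAbove (Set.range fun n => X.N (u n)) →
    X.Mem f ∧ Tendsto (fun n => X.N (u n)) atTop (𝓝 (X.N f))

/-- The **semi-Fatou property**: if `0 ≤ uₙ ↑ f ∈ X` then `‖uₙ‖ ↑ ‖f‖`. -/
def SemiFatou (X : BanachIdealSpace α μ) : Prop :=
  ∀ (u : ℕ → (α → ℝ)) (f : α → ℝ), (∀ n, X.Mem (u n)) → X.Mem f →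
    (∀ᵐ x ∂μ, 0 ≤ u 0 x) → (∀ᵐ x ∂μ, Monotone fun n => u n x) →
    (∀ᵐ x ∂μ, Tendsto (fun n => u n x) atTop (𝓝 (f x))) →
    Tendsto (fun n => X.N (u n)) atTop (𝓝 (X.N f))

/-- A Banach ideal space is **rearrangement invariant (symmetric)**: equimeasurable
functions belong to the space simultaneously and have equal norms. -/
def Symmetric (X : BanachIdealSpace α μ) : Prop :=
  ∀ f g, AEMeasurable f μ →
    (∀ lam : ℝ, 0 < lam → μ {x | lam < |f x|} = μ {x | lam < |g x|}) →
    X.Mem g → X.Mem f ∧ X.N f = X.N g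

/-- The **non-increasing rearrangement** of a function `f` (w.r.t. the measure `μ`). -/
noncomputable def rear (μ : Measure α) (f : α → ℝ) (t : ℝ) : ℝ :=
  sInf {lam : ℝ | 0 < lam ∧ μ {x | lam < |f x|} ≤ ENNReal.ofReal t}

/-- A (generalized) function space given by `(Mem, N)` contains a **lattice isometric copy
of `ℓ∞`**: there is a linear map from bounded sequences which preserves absolute values
(hence the lattice operations) and is an isometry for the sup norm on bounded sequences. -/
def HasLatticeCopyLinf (Mem : (α → ℝ) → Prop) (N : (α → ℝ) → ℝ) : Prop :=
  ∃ T : (ℕ → ℝ) → (α → ℝ),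
    (∀ x y, T (x + y) = T x + T y) ∧
    (∀ (c : ℝ) x, T (c • x) = c • T x) ∧
    (∀ x, T (fun n => |x n|) = fun t => |T x t|) ∧
    (∀ x : ℕ → ℝ, BddAbove (Set.range fun n => |x n|) →
      Mem (T x) ∧ N (T x) = ⨆ n, |x n|)

end BanachIdealSpace

open BanachIdealSpace

/-- The Marcinkiewicz functional `t ↦ (φ(t)/t) ∫₀ᵗ f*(s) ds` on `(0,∞)`. -/
noncomputable def marcFun (phi : ℝ → ℝ) (f : ℝ → ℝ) (t : ℝ) : ℝ :=
  (phi t / t) * ∫ s in Set.Ioo (0 : ℝ) t, rear (volume.restrict (Set.Ioi (0 : ℝ))) f s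

/-- Membership in the Marcinkiewicz space `M_φ`. -/
def marcMem (phi : ℝ → ℝ) (f : ℝ → ℝ) : Prop :=
  AEMeasurable f (volume.restrict (Set.Ioi (0 : ℝ))) ∧
    BddAbove (Set.range fun t : {t : ℝ // 0 < t} => marcFun phi f t.1)

/-- The Marcinkiewicz norm `‖f‖_{M_φ} = sup_{t>0} (φ(t)/t) ∫₀ᵗ f*(s) ds`. -/
noncomputable def marcNorm (phi : ℝ → ℝ) (f : ℝ → ℝ) : ℝ :=
  ⨆ t : {t : ℝ // 0 < t}, marcFun phi f t.1

/-!
Choose nodes `t_k ↓ 0` and `q_k ↑ 1` so that `g = q_k / φ(t_k)` on `(t_{k+1}, t_k]` satisfies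
`∫₀ˢ g ≤ s / φ(s)`. Then `‖g‖ ≤ 1`, while the single pieces `g · 1_{(t_{k+1}, t_k]}` have norms
tending to `1`. An order continuous `h` has tails `h · 1_{(0, t_k]}` of norm tending to `0`, so
`g - h` still has norm at least `1`. Multiplying infinitely many of the pieces by each coordinate
of a bounded sequence embeds `ℓ∞` isometrically.

The real-valued norm is `0` on functions whose rearrangement is not locally integrable, so the
estimates are made for an `[0, ∞]`-valued norm; a gliding hump argument shows that order continuous
elements have finite extended norm.
-/

open scoped ENNReal

section Rearrangement

variable {α : Type*} [MeasurableSpace α] {μ : Measure α} {f g : α → ℝ}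

/-- The integral `∫₀ᵗ f*(s) ds` of the non-increasing rearrangement, written through the
distribution function by the layer cake formula. It takes the value `∞` where the Bochner integral
of `f*` would be `0` for lack of integrability. -/
noncomputable def rearIntegral (μ : Measure α) (f : α → ℝ) (t : ℝ≥0∞) : ℝ≥0∞ :=
  ∫⁻ l in Ioi (0 : ℝ), min t (μ {x | l < |f x|})

lemma antitone_measure_lt_abs (μ : Measure α) (f : α → ℝ) :
    Antitone fun l : ℝ => μ {x | l < |f x|} :=
  fun _ _ hab => measure_mono fun _ hx => lt_of_le_of_lt hab hx

lemma measurable_min_measure_lt_abs (μ : Measure α) (f : α → ℝ) (t : ℝ≥0∞) :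
    Measurable fun l : ℝ => min t (μ {x | l < |f x|}) :=
  measurable_const.min (antitone_measure_lt_abs μ f).measurable

lemma measure_lt_abs_le_of_forall_gt {l : ℝ} {d : ℝ≥0∞}
    (h : ∀ b, l < b → μ {x | b < |f x|} ≤ d) : μ {x | l < |f x|} ≤ d := by
  obtain ⟨b, b_anti, lt_b, b_lim⟩ := exists_seq_strictAnti_tendsto l
  have levels : {x | l < |f x|} = ⋃ n, {x | b n < |f x|} := by
    ext x
    simp only [mem_ofPred_eq, mem_iUnion]
    exact ⟨fun hx => (b_lim.eventually (gt_mem_nhds hx)).exists,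
      fun ⟨n, hn⟩ => (lt_b n).trans hn⟩
  have levels_mono : Monotone fun n => {x | b n < |f x|} :=
    fun _ _ hmn _ hx => (b_anti.antitone hmn).trans_lt hx
  rw [levels, levels_mono.measure_iUnion]
  exact iSup_le fun n => h _ (lt_b n)

lemma rear_nonneg (μ : Measure α) (f : α → ℝ) (s : ℝ) : 0 ≤ rear μ f s :=
  Real.sInf_nonneg fun _ hy => hy.1.le

lemma rear_le_iff {s l : ℝ} (hl : 0 < l)
    (hs : ∃ m : ℝ, 0 < m ∧ μ {x | m < |f x|} ≤ ENNReal.ofReal s) :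
    rear μ f s ≤ l ↔ μ {x | l < |f x|} ≤ ENNReal.ofReal s := by
  refine ⟨fun h => measure_lt_abs_le_of_forall_gt fun b hb => ?_,
    fun h => csInf_le ⟨0, fun _ hy => hy.1.le⟩ ⟨hl, h⟩⟩
  obtain ⟨m, ⟨-, hm⟩, hmb⟩ := exists_lt_of_csInf_lt hs (h.trans_lt hb)
  exact (antitone_measure_lt_abs μ f hmb.le).trans hm

lemma tendsto_measure_lt_abs_atTop (hf : AEMeasurable f μ) {l : ℝ}
    (hl : μ {x | l < |f x|} ≠ ⊤) : Tendsto (fun m : ℝ => μ {x | m < |f x|}) atTop (𝓝 0) := by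
  have no_common_point : ⋂ m : ℝ, {x | m < |f x|} = ∅ :=
    eq_empty_of_forall_notMem fun x hx => lt_irrefl |f x| (mem_iInter.1 hx |f x|)
  rw [← measure_empty (μ := μ), ← no_common_point]
  exact tendsto_measure_iInter_atTop (fun m => nullMeasurableSet_lt aemeasurable_const hf.abs)
    (fun _ _ hab _ hx => lt_of_le_of_lt hab hx) ⟨l, hl⟩

lemma exists_measure_lt_abs_le (hf : AEMeasurable f μ) {l : ℝ} (hl : μ {x | l < |f x|} ≠ ⊤)
    {d : ℝ≥0∞} (hd : 0 < d) : ∃ m : ℝ, 0 < m ∧ μ {x | m < |f x|} ≤ d :=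
  let ⟨m, hm, hm0⟩ := (((tendsto_measure_lt_abs_atTop hf hl).eventually (gt_mem_nhds hd)).and
    (eventually_gt_atTop 0)).exists
  ⟨m, hm0, hm.le⟩

lemma volume_ofReal_lt_inter_Ioo (d : ℝ≥0∞) (t : ℝ) :
    volume ({s : ℝ | ENNReal.ofReal s < d} ∩ Ioo 0 t) = min (ENNReal.ofReal t) d := by
  obtain rfl | hd := eq_or_ne d ⊤
  · simp
  have initial : {s : ℝ | ENNReal.ofReal s < d} ∩ Ioo 0 t = Ioo 0 (min t d.toReal) := by
    ext s
    simp only [mem_inter_iff, mem_ofPred_eq, mem_Ioo, lt_min_iff]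
    constructor
    · rintro ⟨hsd, hs, hst⟩
      exact ⟨hs, hst, (ENNReal.ofReal_lt_iff_lt_toReal hs.le hd).1 hsd⟩
    · rintro ⟨hs, hst, hsd⟩
      exact ⟨(ENNReal.ofReal_lt_iff_lt_toReal hs.le hd).2 hsd, hs, hst⟩
  rw [initial, Real.volume_Ioo, sub_zero, ENNReal.ofReal_min, ENNReal.ofReal_toReal hd]

lemma integral_rear_of_forall_eq_top (h : ∀ l : ℝ, 0 < l → μ {x | l < |f x|} = ⊤) (t : ℝ) :
    ∫ s in Ioo 0 t, rear μ f s = (rearIntegral μ f (ENNReal.ofReal t)).toReal := by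
  have rear_zero (s : ℝ) : rear μ f s = 0 := by
    have no_level : {l : ℝ | 0 < l ∧ μ {x | l < |f x|} ≤ ENNReal.ofReal s} = ∅ :=
      eq_empty_of_forall_notMem fun l hl => by simpa [h l hl.1] using hl.2
    rw [rear, no_level, Real.sInf_empty]
  have eq_const : rearIntegral μ f (ENNReal.ofReal t) =
      ∫⁻ _ in Ioi (0 : ℝ), ENNReal.ofReal t :=
    setLIntegral_congr_fun measurableSet_Ioi fun l hl => by simp [h l hl]
  rw [eq_const, setLIntegral_const, Real.volume_Ioi, ENNReal.toReal_mul]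
  simp [rear_zero]

lemma integral_rear (hf : AEMeasurable f μ) (t : ℝ) :
    ∫ s in Ioo 0 t, rear μ f s = (rearIntegral μ f (ENNReal.ofReal t)).toReal := by
  by_cases h : ∀ l : ℝ, 0 < l → μ {x | l < |f x|} = ⊤
  · exact integral_rear_of_forall_eq_top h t
  push Not at h
  obtain ⟨l₀, -, hl₀⟩ := h
  have exists_level (s : ℝ) (hs : 0 < s) :
      ∃ m : ℝ, 0 < m ∧ μ {x | m < |f x|} ≤ ENNReal.ofReal s :=
    exists_measure_lt_abs_le hf hl₀ (ENNReal.ofReal_pos.2 hs)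
  have rear_anti : AntitoneOn (rear μ f) (Ioo 0 t) := fun a ha _ _ hab =>
    csInf_le_csInf ⟨0, fun _ hy => hy.1.le⟩ (exists_level a ha.1)
      fun _ hy => ⟨hy.1, hy.2.trans (ENNReal.ofReal_le_ofReal hab)⟩
  have rear_meas := aemeasurable_restrict_of_antitoneOn (μ := volume) measurableSet_Ioo rear_anti
  rw [integral_eq_lintegral_of_nonneg_ae (Eventually.of_forall (rear_nonneg μ f))
      rear_meas.aestronglyMeasurable,
    lintegral_eq_lintegral_meas_lt _ (Eventually.of_forall (rear_nonneg μ f)) rear_meas]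
  congr 1
  refine setLIntegral_congr_fun measurableSet_Ioi fun l hl => ?_
  have levels : {s | l < rear μ f s} ∩ Ioo 0 t =
      {s | ENNReal.ofReal s < μ {x | l < |f x|}} ∩ Ioo 0 t := by
    ext s
    exact and_congr_left fun hs =>
      not_le.symm.trans ((rear_le_iff hl (exists_level s hs.1)).not.trans not_le)
  rw [Measure.restrict_apply' measurableSet_Ioo, levels, volume_ofReal_lt_inter_Ioo]

lemma rearIntegral_mono (h : ∀ᵐ x ∂μ, |f x| ≤ |g x|) (t : ℝ≥0∞) :
    rearIntegral μ f t ≤ rearIntegral μ g t :=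
  lintegral_mono fun _ => min_le_min le_rfl
    (measure_mono_ae (h.mono fun _ hx hl => lt_of_lt_of_le hl hx))

lemma rearIntegral_mul_le (f : α → ℝ) {c : ℝ≥0∞} (hc : 1 ≤ c) (hc' : c ≠ ⊤) (t : ℝ≥0∞) :
    rearIntegral μ f (c * t) ≤ c * rearIntegral μ f t := by
  rw [rearIntegral, rearIntegral, ← lintegral_const_mul' _ _ hc']
  refine lintegral_mono fun l => ?_
  rw [mul_min]
  exact min_le_min le_rfl (le_mul_of_one_le_left' hc)

lemma rearIntegral_ne_top_of_ne_top {s t : ℝ≥0∞} (hs : s ≠ 0) (hs' : s ≠ ⊤) (ht : t ≠ ⊤)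
    (h : rearIntegral μ f s ≠ ⊤) : rearIntegral μ f t ≠ ⊤ := by
  have hc : max 1 (t / s) ≠ ⊤ := max_ne_top ENNReal.one_ne_top (ENNReal.div_ne_top ht hs)
  refine ne_top_of_le_ne_top (ENNReal.mul_ne_top hc h) ?_
  refine le_trans (lintegral_mono fun l => min_le_min ?_ le_rfl)
    (rearIntegral_mul_le f (le_max_left 1 (t / s)) hc s)
  calc t = t / s * s := (ENNReal.div_mul_cancel hs hs').symm
    _ ≤ max 1 (t / s) * s := by gcongr; exact le_max_right _ _

lemma setLIntegral_Ioi_comp_mul_left (F : ℝ → ℝ≥0∞) {c : ℝ} (hc : 0 < c) :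
    ∫⁻ l in Ioi (0 : ℝ), F (c * l) = ENNReal.ofReal c⁻¹ * ∫⁻ l in Ioi (0 : ℝ), F l := by
  have preimage_Ioi : (c * ·) ⁻¹' Ioi (0 : ℝ) = Ioi 0 := by
    ext l; simp [hc]
  have emb : MeasurableEmbedding (c * ·) := (Homeomorph.mulLeft₀ c hc.ne').measurableEmbedding
  calc ∫⁻ l in Ioi (0 : ℝ), F (c * l)
      = ∫⁻ l, F l ∂((volume.restrict (Ioi (0 : ℝ))).map (c * ·)) := (emb.lintegral_map F).symm
    _ = ∫⁻ l in Ioi (0 : ℝ), F l ∂(volume.map (c * ·)) := by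
      rw [emb.restrict_map volume (Ioi 0), preimage_Ioi]
    _ = ENNReal.ofReal c⁻¹ * ∫⁻ l in Ioi (0 : ℝ), F l := by
      rw [Real.map_volume_mul_left hc.ne', Measure.restrict_smul, lintegral_smul_measure,
        abs_of_pos (inv_pos.2 hc), smul_eq_mul]

lemma rearIntegral_const_mul {c : ℝ} (hc : 0 ≤ c) (f : α → ℝ) (t : ℝ≥0∞) :
    rearIntegral μ (fun x => c * f x) t = ENNReal.ofReal c * rearIntegral μ f t := by
  obtain rfl | hc := hc.eq_or_lt
  · have : rearIntegral μ (fun x => 0 * f x) t = ∫⁻ _ in Ioi (0 : ℝ), 0 :=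
      setLIntegral_congr_fun measurableSet_Ioi fun _ hl => by
        simp [(mem_Ioi.1 hl).not_gt]
    rw [this, lintegral_zero, ENNReal.ofReal_zero, zero_mul]
  rw [rearIntegral, rearIntegral, ← inv_inv c, ← setLIntegral_Ioi_comp_mul_left _ (inv_pos.2 hc)]
  refine lintegral_congr fun l => ?_
  simp only [inv_inv, abs_mul, abs_of_pos hc, inv_mul_lt_iff₀ hc]

lemma rearIntegral_le_tsum {ι : Type*} [Countable ι] {v : ι → α → ℝ}
    (h : ∀ x l, 0 ≤ l → l < |f x| → ∃ k, l < |v k x|) (t : ℝ≥0∞) :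
    rearIntegral μ f t ≤ ∑' k, rearIntegral μ (v k) t := by
  simp only [rearIntegral]
  rw [← lintegral_tsum fun k => (measurable_min_measure_lt_abs μ (v k) t).aemeasurable]
  refine setLIntegral_mono' measurableSet_Ioi fun l (hl : 0 < l) => ?_
  by_cases hk : ∃ k, t ≤ μ {x | l < |v k x|}
  · obtain ⟨k, hk⟩ := hk
    calc min t (μ {x | l < |f x|}) ≤ min t (μ {x | l < |v k x|}) := by simp [hk]
      _ ≤ ∑' k, min t (μ {x | l < |v k x|}) := ENNReal.le_tsum k
  · push Not at hk
    calc min t (μ {x | l < |f x|}) ≤ μ (⋃ k, {x | l < |v k x|}) :=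
        (min_le_right _ _).trans (measure_mono fun x hx => mem_iUnion.2 (h x l hl.le hx))
      _ ≤ ∑' k, μ {x | l < |v k x|} := measure_iUnion_le _
      _ = ∑' k, min t (μ {x | l < |v k x|}) := by simp only [min_eq_right (hk _).le]

lemma rearIntegral_le_add {w : α → ℝ} {a b : ℝ} (ha : 0 ≤ a) (hb : 0 ≤ b) (hab : a + b ≤ 1)
    (h : ∀ x, |w x| ≤ a * |f x| + b * |g x|) (t : ℝ≥0∞) :
    rearIntegral μ w t ≤ rearIntegral μ f t + rearIntegral μ g t := by
  refine (rearIntegral_le_tsum (v := fun i : Bool => cond i g f) (fun x l hl hlw => ?_) t).trans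
    (tsum_bool _).le
  by_contra! hle
  have hf : |f x| ≤ l := hle false
  have hg : |g x| ≤ l := hle true
  exact hlw.not_ge <| calc
    |w x| ≤ a * l + b * l := (h x).trans (by gcongr)
    _ ≤ l := by rw [← add_mul]; exact mul_le_of_le_one_left hl hab

lemma rearIntegral_le_of_measure_support_le {s t : ℝ≥0∞} (hs : μ (Function.support f) ≤ s) :
    rearIntegral μ f t ≤ rearIntegral μ f s := by
  refine setLIntegral_mono' measurableSet_Ioi fun l hl => ?_
  have : μ {x | l < |f x|} ≤ s :=
    (measure_mono fun x hx => abs_pos.1 (lt_trans hl hx)).trans hs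
  rw [min_eq_right this]
  exact min_le_right _ _

lemma rearIntegral_le_of_abs_le {L : ℝ} {A : Set α} (hL : ∀ x, |f x| ≤ L)
    (hA : Function.support f ⊆ A) (t : ℝ≥0∞) :
    rearIntegral μ f t ≤ ENNReal.ofReal L * min t (μ A) := by
  have pointwise (l : ℝ) (hl : l ∈ Ioi (0 : ℝ)) :
      min t (μ {x | l < |f x|}) ≤ (Iio L).indicator (fun _ => min t (μ A)) l := by
    by_cases hlL : l < L
    · rw [indicator_of_mem (mem_Iio.2 hlL)]
      exact min_le_min le_rfl (measure_mono fun x hx => hA (abs_pos.1 (lt_trans hl hx)))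
    · have : {x | l < |f x|} = ∅ :=
        eq_empty_of_forall_notMem fun x hx => hlL (lt_of_lt_of_le hx (hL x))
      simp [this]
  calc rearIntegral μ f t ≤ ∫⁻ l in Ioi 0, (Iio L).indicator (fun _ => min t (μ A)) l :=
        setLIntegral_mono' measurableSet_Ioi pointwise
    _ = ENNReal.ofReal L * min t (μ A) := by
      rw [lintegral_indicator measurableSet_Iio, Measure.restrict_restrict measurableSet_Iio,
        Iio_inter_Ioi, setLIntegral_const, Real.volume_Ioo, sub_zero, mul_comm]

lemma le_rearIntegral_of_le_abs {a : ℝ} {A : Set α} (hA : ∀ x ∈ A, a ≤ |f x|) (t : ℝ≥0∞) :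
    ENNReal.ofReal a * min t (μ A) ≤ rearIntegral μ f t := by
  calc ENNReal.ofReal a * min t (μ A) = ∫⁻ _ in Ioo 0 a, min t (μ A) := by
        rw [setLIntegral_const, Real.volume_Ioo, sub_zero, mul_comm]
    _ ≤ ∫⁻ l in Ioo 0 a, min t (μ {x | l < |f x|}) :=
        setLIntegral_mono' measurableSet_Ioo fun l hl =>
          min_le_min le_rfl (measure_mono fun x hx => hl.2.trans_le (hA x hx))
    _ ≤ rearIntegral μ f t := lintegral_mono_set Ioo_subset_Ioi_self

end Rearrangement

local notation "μ₀" => Measure.restrict (volume : Measure ℝ) (Ioi (0 : ℝ))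

lemma rearIntegral_le_of_antitoneOn {g : ℝ → ℝ} (hg0 : ∀ s, 0 ≤ g s)
    (hg : AntitoneOn g (Ioi 0)) {t : ℝ} (ht : 0 < t) :
    rearIntegral μ₀ g (ENNReal.ofReal t) ≤
      ∫⁻ s in Ioo 0 t, ENNReal.ofReal (g s) := by
  have hm : AEMeasurable g (volume.restrict (Ioo 0 t)) :=
    aemeasurable_restrict_of_antitoneOn measurableSet_Ioo (hg.mono Ioo_subset_Ioi_self)
  rw [lintegral_eq_lintegral_meas_lt _ (Eventually.of_forall hg0) hm]
  refine lintegral_mono fun l => ?_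
  simp only [Measure.restrict_apply' measurableSet_Ioo, Measure.restrict_apply' measurableSet_Ioi,
    abs_of_nonneg (hg0 _)]
  by_cases hl : l < g t
  · have : {s | l < g s} ∩ Ioo 0 t = Ioo 0 t := inter_eq_right.2 fun s hs =>
      hl.trans_le (hg hs.1 ht hs.2.le)
    simp [this]
  · refine (min_le_right _ _).trans (measure_mono ?_)
    rintro s ⟨hls, hs⟩
    exact ⟨hls, hs, not_le.1 fun hts => hl (lt_of_lt_of_le hls (hg ht hs hts))⟩

/-- Quasi-concavity of `φ` on `(0,∞)` in the sense of rearrangement invariant spaces, unrelated to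
Mathlib's `QuasiconcaveOn`. -/
structure QuasiConcave (φ : ℝ → ℝ) : Prop where
  pos : ∀ t, 0 < t → 0 < φ t
  monotoneOn : MonotoneOn φ (Ioi 0)
  antitoneOn_div : AntitoneOn (fun t => φ t / t) (Ioi 0)

namespace QuasiConcave

variable {φ : ℝ → ℝ} (hφ : QuasiConcave φ)
include hφ

lemma self_div_pos {t : ℝ} (ht : 0 < t) : 0 < t / φ t := div_pos ht (hφ.pos t ht)

lemma self_div_le_self_div {s t : ℝ} (hs : 0 < s) (hst : s ≤ t) : s / φ s ≤ t / φ t := by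
  have ht := hs.trans_le hst
  rw [← inv_div (φ s), ← inv_div (φ t)]
  exact inv_anti₀ (div_pos (hφ.pos t ht) ht) (hφ.antitoneOn_div hs ht hst)

lemma div_mul_min_le {r t : ℝ} (hr : 0 < r) (ht : 0 < t) : φ t / t * min t r ≤ φ r := by
  rcases le_total t r with htr | hrt
  · rw [min_eq_left htr, div_mul_cancel₀ _ ht.ne']
    exact hφ.monotoneOn ht hr htr
  · rw [min_eq_right hrt]
    calc φ t / t * r ≤ φ r / r * r :=
          mul_le_mul_of_nonneg_right (hφ.antitoneOn_div hr ht hrt) hr.le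
      _ = φ r := div_mul_cancel₀ _ hr.ne'

lemma tendsto_nhdsGT_zero_or_exists_pos_le :
    Tendsto φ (𝓝[>] 0) (𝓝 0) ∨ ∃ c, 0 < c ∧ ∀ t, 0 < t → c ≤ φ t := by
  by_cases hc : ∃ c, 0 < c ∧ ∀ t, 0 < t → c ≤ φ t
  · exact Or.inr hc
  push Not at hc
  refine Or.inl (tendsto_order.2 ⟨fun c hc0 => ?_, fun c hc0 => ?_⟩)
  · filter_upwards [self_mem_nhdsWithin] with t ht using hc0.trans (hφ.pos t ht)
  · obtain ⟨r, hr, hrc⟩ := hc c hc0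
    filter_upwards [Ioc_mem_nhdsGT hr] with t ht
    exact (hφ.monotoneOn ht.1 hr ht.2).trans_lt hrc

end QuasiConcave

/-- The Marcinkiewicz functional `t ↦ (φ(t)/t) ∫₀ᵗ f*(s) ds` with values in `[0,∞]`. -/
noncomputable def emarcFun (φ f : ℝ → ℝ) (t : ℝ) : ℝ≥0∞ :=
  ENNReal.ofReal (φ t / t) * rearIntegral μ₀ f (ENNReal.ofReal t)

/-- The Marcinkiewicz norm with values in `[0,∞]`. Unlike `marcNorm`, it is `∞` on functions whose
rearrangement is not locally integrable. -/
noncomputable def emarcNorm (φ f : ℝ → ℝ) : ℝ≥0∞ :=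
  ⨆ t : {t : ℝ // 0 < t}, emarcFun φ f t

section ExtendedNorm

variable {φ f g : ℝ → ℝ} {t : ℝ}

lemma emarcFun_mono (h : ∀ᵐ x ∂μ₀, |f x| ≤ |g x|) (t : ℝ) : emarcFun φ f t ≤ emarcFun φ g t :=
  mul_le_mul_right (rearIntegral_mono h _) _

lemma emarcFun_const_mul {c : ℝ} (hc : 0 ≤ c) (φ f : ℝ → ℝ) (t : ℝ) :
    emarcFun φ (fun x => c * f x) t = ENNReal.ofReal c * emarcFun φ f t := by
  rw [emarcFun, rearIntegral_const_mul hc, mul_left_comm, emarcFun]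

lemma emarcFun_le_tsum {v : ℕ → ℝ → ℝ} (h : ∀ x l, 0 ≤ l → l < |f x| → ∃ k, l < |v k x|) (t : ℝ) :
    emarcFun φ f t ≤ ∑' k, emarcFun φ (v k) t := by
  simp only [emarcFun, ENNReal.tsum_mul_left]
  exact mul_le_mul_right (rearIntegral_le_tsum h _) _

lemma emarcFun_le_emarcNorm (φ f : ℝ → ℝ) (ht : 0 < t) : emarcFun φ f t ≤ emarcNorm φ f :=
  le_iSup (fun t : {t : ℝ // 0 < t} => emarcFun φ f t) ⟨t, ht⟩

lemma emarcNorm_le {C : ℝ≥0∞} (h : ∀ t, 0 < t → emarcFun φ f t ≤ C) : emarcNorm φ f ≤ C :=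
  iSup_le fun t => h t t.2

lemma emarcNorm_mono (h : ∀ᵐ x ∂μ₀, |f x| ≤ |g x|) : emarcNorm φ f ≤ emarcNorm φ g :=
  iSup_mono fun t => emarcFun_mono h t

lemma emarcNorm_const_mul {c : ℝ} (hc : 0 ≤ c) (φ f : ℝ → ℝ) :
    emarcNorm φ (fun x => c * f x) = ENNReal.ofReal c * emarcNorm φ f := by
  simp only [emarcNorm, emarcFun_const_mul hc, ENNReal.mul_iSup]

lemma emarcNorm_eq_zero_of_ae_eq_zero (h : ∀ᵐ x ∂μ₀, f x = 0) : emarcNorm φ f = 0 := by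
  have le_zero_mul : ∀ᵐ x ∂μ₀, |f x| ≤ |(0 : ℝ) * f x| := h.mono fun x hx => by simp [hx]
  refine nonpos_iff_eq_zero.1 ((emarcNorm_mono le_zero_mul).trans_eq ?_)
  rw [emarcNorm_const_mul le_rfl, ENNReal.ofReal_zero, zero_mul]

lemma emarcNorm_le_add {w : ℝ → ℝ} {a b : ℝ} (ha : 0 < a) (hb : 0 < b) (hab : a + b ≤ 1)
    (h : ∀ x, |w x| ≤ |f x| + |g x|) :
    emarcNorm φ w ≤
      ENNReal.ofReal a⁻¹ * emarcNorm φ f + ENNReal.ofReal b⁻¹ * emarcNorm φ g := by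
  have ha' : 0 ≤ a⁻¹ := (inv_pos.2 ha).le
  have hb' : 0 ≤ b⁻¹ := (inv_pos.2 hb).le
  have convex (x : ℝ) : |w x| ≤ a * |a⁻¹ * f x| + b * |b⁻¹ * g x| := by
    rw [abs_mul, abs_mul, abs_of_nonneg ha', abs_of_nonneg hb', mul_inv_cancel_left₀ ha.ne',
      mul_inv_cancel_left₀ hb.ne']
    exact h x
  rw [← emarcNorm_const_mul ha', ← emarcNorm_const_mul hb']
  refine emarcNorm_le fun t ht => ?_
  calc emarcFun φ w t ≤ emarcFun φ (fun x => a⁻¹ * f x) t + emarcFun φ (fun x => b⁻¹ * g x) t := by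
        rw [emarcFun, emarcFun, emarcFun, ← mul_add]
        exact mul_le_mul_right (rearIntegral_le_add ha.le hb.le hab convex _) _
    _ ≤ _ := add_le_add (emarcFun_le_emarcNorm _ _ ht) (emarcFun_le_emarcNorm _ _ ht)

end ExtendedNorm

section NormComparison

variable {φ f : ℝ → ℝ} (hφ : QuasiConcave φ)
include hφ

lemma marcFun_eq_toReal (hf : AEMeasurable f μ₀) {t : ℝ} (ht : 0 < t) :
    marcFun φ f t = (emarcFun φ f t).toReal := by
  rw [marcFun, emarcFun, ENNReal.toReal_mul, ENNReal.toReal_ofReal (div_pos (hφ.pos t ht) ht).le,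
    integral_rear hf]

lemma marcNorm_eq_toReal (hf : AEMeasurable f μ₀) (h : emarcNorm φ f ≠ ⊤) :
    marcNorm φ f = (emarcNorm φ f).toReal := by
  rw [emarcNorm, ENNReal.toReal_iSup fun t =>
    ne_top_of_le_ne_top h (emarcFun_le_emarcNorm φ f t.2)]
  exact iSup_congr fun t => marcFun_eq_toReal hφ hf t.2

lemma marcMem_of_emarcNorm_ne_top (hf : AEMeasurable f μ₀) (h : emarcNorm φ f ≠ ⊤) :
    marcMem φ f := by
  refine ⟨hf, (emarcNorm φ f).toReal, ?_⟩
  rintro _ ⟨t, rfl⟩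
  change marcFun φ f t ≤ _
  rw [marcFun_eq_toReal hφ hf t.2]
  exact ENNReal.toReal_mono h (emarcFun_le_emarcNorm φ f t.2)

lemma emarcNorm_ne_top_of_marcMem (hf : marcMem φ f) (h : rearIntegral μ₀ f 1 ≠ ⊤) :
    emarcNorm φ f ≠ ⊤ := by
  obtain ⟨hf_meas, B, hB⟩ := hf
  refine ne_top_of_le_ne_top (ENNReal.ofReal_ne_top (r := B)) (emarcNorm_le fun t ht => ?_)
  have emarcFun_ne_top : emarcFun φ f t ≠ ⊤ := ENNReal.mul_ne_top ENNReal.ofReal_ne_top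
    (rearIntegral_ne_top_of_ne_top one_ne_zero ENNReal.one_ne_top ENNReal.ofReal_ne_top h)
  have marcFun_le : marcFun φ f t ≤ B := hB (mem_range_self (⟨t, ht⟩ : {t : ℝ // 0 < t}))
  rw [marcFun_eq_toReal hφ hf_meas ht] at marcFun_le
  exact ENNReal.le_ofReal_iff_toReal_le emarcFun_ne_top (ENNReal.toReal_nonneg.trans marcFun_le)
    |>.2 marcFun_le

lemma emarcNorm_le_of_abs_le {L δ : ℝ} (hδ : 0 < δ) (hL : ∀ x, |f x| ≤ L)
    (hsupp : μ₀ (Function.support f) ≤ ENNReal.ofReal δ) :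
    emarcNorm φ f ≤ ENNReal.ofReal (L * φ δ) := by
  have hL0 : 0 ≤ L := (abs_nonneg (f 0)).trans (hL 0)
  refine emarcNorm_le fun t ht => ?_
  have hφt : 0 ≤ φ t / t := (div_pos (hφ.pos t ht) ht).le
  calc emarcFun φ f t
      ≤ ENNReal.ofReal (φ t / t) *
        (ENNReal.ofReal L * min (ENNReal.ofReal t) (ENNReal.ofReal δ)) := by
        refine mul_le_mul_right ((rearIntegral_le_of_abs_le hL subset_rfl _).trans ?_) _
        gcongr
    _ = ENNReal.ofReal (L * (φ t / t * min t δ)) := by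
        rw [← ENNReal.ofReal_min, ← ENNReal.ofReal_mul hL0, ← ENNReal.ofReal_mul hφt]
        congr 1
        ring
    _ ≤ ENNReal.ofReal (L * φ δ) := by gcongr; exact hφ.div_mul_min_le hδ ht

end NormComparison

lemma exists_seq_of_step {β : Type*} {P : ℕ → β → Prop} {R : ℕ → β → β → Prop}
    (start : ∃ x, P 0 x) (step : ∀ n x, P n x → ∃ y, P (n + 1) y ∧ R n x y) :
    ∃ u : ℕ → β, (∀ n, P n (u n)) ∧ ∀ n, R n (u n) (u (n + 1)) := by
  obtain ⟨x₀, hx₀⟩ := start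
  choose! next next_mem next_rel using step
  have mem (n : ℕ) : P n (n.rec x₀ next) := by
    induction n with
    | zero => exact hx₀
    | succ n ih => exact next_mem n _ ih
  exact ⟨fun n => n.rec x₀ next, mem, fun n => next_rel n _ (mem n)⟩

/-- A hump of `h` above height `M`: a measurable function between `0` and `|h|` that vanishes where
`|h| < M`. -/
structure HumpAbove {α : Type*} [MeasurableSpace α] (μ : Measure α) (h : α → ℝ) (M : ℝ)
    (v : α → ℝ) : Prop where
  aemeasurable : AEMeasurable v μ
  nonneg : ∀ x, 0 ≤ v x
  le_abs : ∀ x, v x ≤ |h x|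
  le_abs_of_ne_zero : ∀ x, v x ≠ 0 → M ≤ |h x|

section ExistsHump

lemma iSup_setLIntegral_Ioo_natCast (F : ℝ → ℝ≥0∞) (m : ℝ) :
    ⨆ n : ℕ, ∫⁻ l in Ioo m n, F l = ∫⁻ l in Ioi m, F l := by
  have mono : Monotone fun n : ℕ => Ioo m n :=
    fun _ _ hij => Ioo_subset_Ioo_right (Nat.cast_le.2 hij)
  have exhaust : ⋃ n : ℕ, Ioo m n = Ioi m := by
    ext l
    simpa using fun _ => exists_nat_gt l
  rw [← setLIntegral_iUnion_of_directed F mono.directed_le, exhaust]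

variable {α : Type*} [MeasurableSpace α] {μ : Measure α} {h : α → ℝ}

lemma setLIntegral_Ioi_eq_top_of_rearIntegral_eq_top {m : ℝ} (hm : 0 ≤ m) {t : ℝ≥0∞} (ht : t ≠ ⊤)
    (hK : rearIntegral μ h t = ⊤) : ∫⁻ l in Ioi m, min t (μ {x | l < |h x|}) = ⊤ := by
  have low_levels : ∫⁻ l in Ioc 0 m, min t (μ {x | l < |h x|}) ≠ ⊤ := by
    refine ne_top_of_le_ne_top (ENNReal.mul_ne_top ht
      (measure_Ioc_lt_top (μ := volume) (a := 0) (b := m)).ne) ?_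
    exact (lintegral_mono fun _ => min_le_left _ _).trans_eq (setLIntegral_const _ _)
  rw [rearIntegral, ← Ioc_union_Ioi_eq_Ioi hm,
    lintegral_union measurableSet_Ioi (Ioc_disjoint_Ioi le_rfl)] at hK
  exact (ENNReal.add_eq_top.1 hK).resolve_left low_levels

lemma exists_hump_of_measure_ne_top (hh : AEMeasurable h μ) {δ : ℝ≥0∞} (hδ : 0 < δ) (hδ' : δ ≠ ⊤)
    (hK : rearIntegral μ h δ = ⊤) {l : ℝ} (hl : μ {x | l < |h x|} ≠ ⊤) (M : ℝ) {C : ℝ≥0∞}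
    (hC : C ≠ ⊤) : ∃ w L, HumpAbove μ h M w ∧ (∀ x, w x ≤ L) ∧ μ (Function.support w) ≤ δ ∧
      C ≤ rearIntegral μ w δ := by
  obtain ⟨m, ⟨hmδ, hMm⟩, hm0⟩ := (((tendsto_measure_lt_abs_atTop hh hl).eventually
    (ge_mem_nhds hδ)).and (eventually_ge_atTop M)|>.and (eventually_ge_atTop 0)).exists
  let w (n : ℕ) : α → ℝ := {x | m < |h x|}.indicator fun x => min |h x| n
  have w_nonneg (n : ℕ) (x : α) : 0 ≤ min |h x| n := le_min (abs_nonneg _) n.cast_nonneg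
  have support_subset (n : ℕ) : Function.support (w n) ⊆ {x | m < |h x|} := support_indicator_subset
  have levels_lt (n : ℕ) : ∫⁻ l in Ioo m n, min δ (μ {x | l < |h x|}) ≤ rearIntegral μ (w n) δ := by
    refine (setLIntegral_mono' measurableSet_Ioo fun l hl => ?_).trans
      (lintegral_mono_set (Ioo_subset_Ioi_self.trans (Ioi_subset_Ioi hm0)))
    refine min_le_min le_rfl (measure_mono fun x (hx : l < |h x|) => ?_)
    have hwx : w n x = min |h x| n :=
      indicator_of_mem (s := {x | m < |h x|}) (hl.1.trans hx) fun x => min |h x| n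
    exact (lt_min hx hl.2).trans_le (hwx ▸ le_abs_self _)
  have exhaust : ⨆ n : ℕ, ∫⁻ l in Ioo m n, min δ (μ {x | l < |h x|}) = ⊤ := by
    rw [iSup_setLIntegral_Ioo_natCast,
      setLIntegral_Ioi_eq_top_of_rearIntegral_eq_top hm0 hδ' hK]
  obtain ⟨n, hn⟩ := lt_iSup_iff.1 (hC.lt_top.trans_eq exhaust.symm)
  refine ⟨w n, n, ⟨?_, ?_, ?_, ?_⟩, ?_, ?_, hn.le.trans (levels_lt n)⟩
  · exact (hh.abs.min aemeasurable_const).indicator₀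
      (nullMeasurableSet_lt aemeasurable_const hh.abs)
  · exact indicator_nonneg fun x _ => w_nonneg n x
  · exact indicator_le' (fun x _ => min_le_left _ _) fun x _ => abs_nonneg _
  · exact fun x hx => hMm.trans (support_subset n hx).le
  · exact indicator_le' (fun x _ => min_le_right _ _) fun x _ => n.cast_nonneg
  · exact (measure_mono (support_subset n)).trans hmδ

end ExistsHump

lemma exists_measure_inter_Iic_eq {E : Set ℝ} {δ : ℝ} (hδ : 0 ≤ δ) (hE : ENNReal.ofReal δ < μ₀ E) :
    ∃ x, μ₀ (E ∩ Iic x) = ENNReal.ofReal δ := by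
  have finite (x : ℝ) : μ₀ (E ∩ Iic x) ≠ ⊤ := by
    refine ne_top_of_le_ne_top (measure_Ioc_lt_top (μ := volume) (a := 0) (b := x)).ne ?_
    rw [Measure.restrict_apply' measurableSet_Ioi]
    exact measure_mono fun y hy => ⟨hy.2, hy.1.2⟩
  have lipschitz : LipschitzWith 1 fun x => (μ₀ (E ∩ Iic x)).toReal := by
    refine LipschitzWith.of_le_add fun x y => ?_
    rw [← ENNReal.toReal_ofReal (dist_nonneg (x := x) (y := y)),
      ← ENNReal.toReal_add (finite y) ENNReal.ofReal_ne_top]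
    refine ENNReal.toReal_mono (by finiteness [finite y]) ?_
    calc μ₀ (E ∩ Iic x) ≤ μ₀ (E ∩ Iic y ∪ Ioc y x) := by
          refine measure_mono fun z hz => ?_
          exact (le_or_gt z y).imp (fun hzy => ⟨hz.1, hzy⟩) fun hyz => ⟨hyz, hz.2⟩
      _ ≤ μ₀ (E ∩ Iic y) + volume (Ioc y x) :=
          (measure_union_le _ _).trans (add_le_add le_rfl (Measure.restrict_apply_le _ _))
      _ ≤ μ₀ (E ∩ Iic y) + ENNReal.ofReal (dist x y) := by
          rw [Real.volume_Ioc, Real.dist_eq]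
          gcongr
          exact le_abs_self _
  obtain ⟨b, hb⟩ : ∃ b, ENNReal.ofReal δ < μ₀ (E ∩ Iic b) := by
    have mono : Monotone fun x : ℝ => E ∩ Iic x :=
      fun _ _ hxy => inter_subset_inter_right _ (Iic_subset_Iic.2 hxy)
    rw [← inter_univ E, ← iUnion_Iic, inter_iUnion, mono.measure_iUnion] at hE
    exact lt_iSup_iff.1 hE
  have at_zero : (μ₀ (E ∩ Iic 0)).toReal = 0 := by
    rw [Measure.restrict_apply' measurableSet_Ioi, inter_assoc, Iic_inter_Ioi, Ioc_self]
    simp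
  obtain ⟨x, hx⟩ := mem_range_of_exists_le_of_exists_ge lipschitz.continuous
    ⟨0, at_zero.trans_le hδ⟩ ⟨b, (ENNReal.ofReal_le_iff_le_toReal (finite b)).1 hb.le⟩
  exact ⟨x, by rw [← hx, ENNReal.ofReal_toReal (finite x)]⟩

lemma exists_hump_of_forall_measure_eq_top {h : ℝ → ℝ} (hh : AEMeasurable h μ₀) {δ : ℝ}
    (hδ : 0 < δ) (htop : ∀ l, μ₀ {x | l < |h x|} = ⊤) (M : ℝ) {C : ℝ≥0∞} (hC : C ≠ ⊤) :
    ∃ w L, HumpAbove μ₀ h M w ∧ (∀ x, w x ≤ L) ∧ μ₀ (Function.support w) ≤ ENNReal.ofReal δ ∧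
      C ≤ rearIntegral μ₀ w (ENNReal.ofReal δ) := by
  have hδ' : ENNReal.ofReal δ ≠ 0 := (ENNReal.ofReal_pos.2 hδ).ne'
  let l := max M (C / ENNReal.ofReal δ).toReal
  have hl : 0 ≤ l := le_max_of_le_right ENNReal.toReal_nonneg
  obtain ⟨x, hx⟩ := exists_measure_inter_Iic_eq hδ.le
    (ENNReal.ofReal_lt_top.trans_eq (htop l).symm)
  let A := {x | l < |h x|} ∩ Iic x
  have A_meas : NullMeasurableSet A μ₀ :=
    (nullMeasurableSet_lt aemeasurable_const hh.abs).inter measurableSet_Iic.nullMeasurableSet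
  have support_subset : Function.support (A.indicator fun _ => l) ⊆ A := support_indicator_subset
  refine ⟨A.indicator fun _ => l, l, ⟨?_, ?_, ?_, ?_⟩, ?_, ?_, ?_⟩
  · exact aemeasurable_const.indicator₀ A_meas
  · exact indicator_nonneg fun _ _ => hl
  · exact indicator_le' (fun _ hy => hy.1.le) fun _ _ => abs_nonneg _
  · exact fun y hy => (le_max_left _ _).trans (support_subset hy).1.le
  · exact indicator_le' (fun _ _ => le_rfl) fun _ _ => hl
  · exact (measure_mono support_subset).trans_eq hx
  · have le_on (y : ℝ) (hy : y ∈ A) : l ≤ |A.indicator (fun _ => l) y| := by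
      rw [indicator_of_mem hy]
      exact le_abs_self l
    calc C = C / ENNReal.ofReal δ * ENNReal.ofReal δ :=
          (ENNReal.div_mul_cancel hδ' ENNReal.ofReal_ne_top).symm
      _ ≤ ENNReal.ofReal l * ENNReal.ofReal δ := by
          gcongr
          exact (ENNReal.le_ofReal_iff_toReal_le (ENNReal.div_ne_top hC hδ') hl).2
            (le_max_right _ _)
      _ = ENNReal.ofReal l * min (ENNReal.ofReal δ) (μ₀ A) := by rw [hx, min_self]
      _ ≤ rearIntegral μ₀ (A.indicator fun _ => l) (ENNReal.ofReal δ) :=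
          le_rearIntegral_of_le_abs le_on _

lemma exists_hump_of_rearIntegral_eq_top {h : ℝ → ℝ} (hh : AEMeasurable h μ₀)
    (hK : rearIntegral μ₀ h 1 = ⊤) {δ : ℝ} (hδ : 0 < δ) (M : ℝ) {C : ℝ≥0∞} (hC : C ≠ ⊤) :
    ∃ w L, HumpAbove μ₀ h M w ∧ (∀ x, w x ≤ L) ∧ μ₀ (Function.support w) ≤ ENNReal.ofReal δ ∧
      C ≤ rearIntegral μ₀ w (ENNReal.ofReal δ) := by
  have hδ' : 0 < ENNReal.ofReal δ := ENNReal.ofReal_pos.2 hδ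
  by_cases htop : ∀ l, μ₀ {x | l < |h x|} = ⊤
  · exact exists_hump_of_forall_measure_eq_top hh hδ htop M hC
  · push Not at htop
    obtain ⟨l, hl⟩ := htop
    have hKδ : rearIntegral μ₀ h (ENNReal.ofReal δ) = ⊤ := not_not.1 fun hne =>
      rearIntegral_ne_top_of_ne_top hδ'.ne' ENNReal.ofReal_ne_top ENNReal.one_ne_top hne hK
    exact exists_hump_of_measure_ne_top hh hδ' ENNReal.ofReal_ne_top hKδ hl M hC

namespace HumpAbove

variable {α : Type*} [MeasurableSpace α] {μ : Measure α} {h : α → ℝ}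

lemma mono {M : ℝ} {v w : α → ℝ} (hv : HumpAbove μ h M v) (hw : AEMeasurable w μ)
    (w_nonneg : ∀ x, 0 ≤ w x) (hwv : ∀ x, w x ≤ v x) : HumpAbove μ h M w where
  aemeasurable := hw
  nonneg := w_nonneg
  le_abs x := (hwv x).trans (hv.le_abs x)
  le_abs_of_ne_zero x hx :=
    hv.le_abs_of_ne_zero x (((w_nonneg x).lt_of_ne' hx).trans_le (hwv x)).ne'

lemma mono_height {M M' : ℝ} {v : α → ℝ} (hv : HumpAbove μ h M v) (hM : M' ≤ M) :
    HumpAbove μ h M' v :=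
  { hv with le_abs_of_ne_zero := fun x hx => hM.trans (hv.le_abs_of_ne_zero x hx) }

lemma indicator_support {M : ℝ} {v : α → ℝ} (hv : HumpAbove μ h M v) (hM : 1 ≤ M) :
    HumpAbove μ h M ((Function.support v).indicator 1) where
  aemeasurable := aemeasurable_const.indicator₀
    (hv.aemeasurable.nullMeasurableSet_preimage (measurableSet_singleton 0).compl)
  nonneg := indicator_nonneg fun _ _ => zero_le_one
  le_abs := indicator_le' (fun x hx => hM.trans (hv.le_abs_of_ne_zero x hx)) fun _ _ => abs_nonneg _
  le_abs_of_ne_zero x hx := hv.le_abs_of_ne_zero x (mem_of_indicator_ne_zero hx)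

variable {v : ℕ → α → ℝ} (hv : ∀ k : ℕ, HumpAbove μ h k (v k))
include hv

lemma bddAbove_range (x : α) : BddAbove (range fun k => v k x) :=
  ⟨|h x|, forall_mem_range.2 fun k => (hv k).le_abs x⟩

lemma le_iSup (k : ℕ) (x : α) : v k x ≤ ⨆ j, v j x := le_ciSup (bddAbove_range hv x) k

lemma iSup_nonneg (x : α) : 0 ≤ ⨆ j, v j x := Real.iSup_nonneg fun k => (hv k).nonneg x

lemma exists_lt_abs_of_lt_abs_iSup {x : α} {l : ℝ} (hl : l < |⨆ j, v j x|) :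
    ∃ k, l < |v k x| := by
  rw [abs_of_nonneg (iSup_nonneg hv x)] at hl
  obtain ⟨k, hk⟩ := exists_lt_of_lt_ciSup hl
  exact ⟨k, hk.trans_le (le_abs_self _)⟩

lemma eq_zero_of_abs_lt {x : α} {k : ℕ} (hk : |h x| < k) : v k x = 0 :=
  not_not.1 fun hne => ((hv k).le_abs_of_ne_zero x hne).not_gt hk

lemma antitone_iSup_add (x : α) : Antitone fun n => ⨆ k, v (n + k) x := by
  intro m n hmn
  refine ciSup_le fun k => ?_
  obtain ⟨d, rfl⟩ := Nat.exists_eq_add_of_le hmn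
  rw [add_assoc]
  exact le_ciSup (f := fun k => v (m + k) x)
    ((bddAbove_range hv x).mono (range_comp_subset_range (m + ·) fun k => v k x)) (d + k)

lemma tendsto_iSup_add (x : α) : Tendsto (fun n => ⨆ k, v (n + k) x) atTop (𝓝 0) := by
  obtain ⟨N, hN⟩ := exists_nat_gt |h x|
  refine tendsto_const_nhds.congr' ((eventually_ge_atTop N).mono fun n hn => ?_)
  have vanish (k : ℕ) : v (n + k) x = 0 :=
    eq_zero_of_abs_lt hv (hN.trans_le (Nat.cast_le.2 (hn.trans (Nat.le_add_right n k))))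
  simp only [vanish, ciSup_const]

end HumpAbove

section OrderContinuous

variable {φ h : ℝ → ℝ} (hφ : QuasiConcave φ)
  (hh : h ∈ ocSet μ₀ (marcMem φ) (marcNorm φ))
include hφ hh

lemma tendsto_emarcNorm_of_antitone {u : ℕ → ℝ → ℝ} (u_meas : ∀ n, AEMeasurable (u n) μ₀)
    (u_nonneg : ∀ n x, 0 ≤ u n x) (u_le : ∀ x, u 0 x ≤ |h x|) (u_anti : ∀ x, Antitone (u · x))
    (u_lim : ∀ x, Tendsto (u · x) atTop (𝓝 0)) (u_fin : emarcNorm φ (u 0) ≠ ⊤) :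
    Tendsto (fun n => emarcNorm φ (u n)) atTop (𝓝 0) := by
  have fin (n : ℕ) : emarcNorm φ (u n) ≠ ⊤ := by
    refine ne_top_of_le_ne_top u_fin (emarcNorm_mono (ae_of_all _ fun x => ?_))
    rw [abs_of_nonneg (u_nonneg n x), abs_of_nonneg (u_nonneg 0 x)]
    exact u_anti x n.zero_le
  have norm_lim : Tendsto (fun n => marcNorm φ (u n)) atTop (𝓝 0) :=
    hh.2 u (fun n => marcMem_of_emarcNorm_ne_top hφ (u_meas n) (fin n))
      (fun n => ae_of_all _ fun x => ⟨u_nonneg n x, (u_anti x n.zero_le).trans (u_le x)⟩)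
      (fun n => ae_of_all _ fun x => u_anti x n.le_succ) (ae_of_all _ u_lim)
  rw [← ENNReal.tendsto_toReal_iff fin ENNReal.zero_ne_top]
  simpa only [marcNorm_eq_toReal hφ (u_meas _) (fin _), ENNReal.toReal_zero] using norm_lim

lemma tendsto_emarcNorm_of_humps {v : ℕ → ℝ → ℝ} (hv : ∀ k : ℕ, HumpAbove μ₀ h k (v k))
    (hfin : emarcNorm φ (fun x => ⨆ k, v k x) ≠ ⊤) :
    Tendsto (fun k => emarcNorm φ (v k)) atTop (𝓝 0) := by
  have hv_shift (n k : ℕ) : HumpAbove μ₀ h k (v (n + k)) :=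
    (hv (n + k)).mono_height (Nat.cast_le.2 (Nat.le_add_left k n))
  have sup_lim : Tendsto (fun n => emarcNorm φ fun x => ⨆ k, v (n + k) x) atTop (𝓝 0) := by
    refine tendsto_emarcNorm_of_antitone hφ hh (u := fun n x => ⨆ k, v (n + k) x)
      (fun n => AEMeasurable.iSup fun k => (hv _).aemeasurable)
      (fun n => HumpAbove.iSup_nonneg (hv_shift n)) (fun x => ciSup_le fun k => (hv _).le_abs x)
      (HumpAbove.antitone_iSup_add hv) (HumpAbove.tendsto_iSup_add hv) ?_
    simpa only [zero_add] using hfin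
  refine tendsto_of_tendsto_of_tendsto_of_le_of_le tendsto_const_nhds sup_lim
    (fun _ => zero_le) fun n => emarcNorm_mono (ae_of_all _ fun x => ?_)
  rw [abs_of_nonneg ((hv n).nonneg x), abs_of_nonneg (HumpAbove.iSup_nonneg (hv_shift n) x)]
  exact HumpAbove.le_iSup (hv_shift n) 0 x

end OrderContinuous

/-- `v` has unit Marcinkiewicz norm, and outside `(b, a)` its functional is at most `ε`. -/
structure IsLocalizedUnit (φ : ℝ → ℝ) (b a : ℝ) (ε : ℝ≥0∞) (v : ℝ → ℝ) : Prop where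
  norm_eq_one : emarcNorm φ v = 1
  emarcFun_le : ∀ t, 0 < t → t ∉ Ioo b a → emarcFun φ v t ≤ ε

section Localization

variable {φ h : ℝ → ℝ} (hφ : QuasiConcave φ)
include hφ

lemma emarcFun_le_of_measure_support_le {v : ℝ → ℝ} {δ a t : ℝ} (hδ : 0 < δ) (hδa : δ ≤ a)
    (hat : a ≤ t) (hnorm : emarcNorm φ v ≤ 1)
    (hsupp : μ₀ (Function.support v) ≤ ENNReal.ofReal δ) :
    emarcFun φ v t ≤ ENNReal.ofReal (φ a / a * (δ / φ δ)) := by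
  have ha := hδ.trans_le hδa
  have inv_pos : 0 ≤ δ / φ δ := (hφ.self_div_pos hδ).le
  calc emarcFun φ v t
      ≤ ENNReal.ofReal (φ a / a) * rearIntegral μ₀ v (ENNReal.ofReal δ) := by
        rw [emarcFun]
        exact mul_le_mul'
          (ENNReal.ofReal_le_ofReal (hφ.antitoneOn_div ha (ha.trans_le hat) hat))
          (rearIntegral_le_of_measure_support_le hsupp)
    _ = ENNReal.ofReal (φ a / a) * (ENNReal.ofReal (δ / φ δ) * emarcFun φ v δ) := by
        rw [emarcFun, ← mul_assoc (ENNReal.ofReal (δ / φ δ)), ← ENNReal.ofReal_mul inv_pos,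
          div_mul_div_cancel₀ (hφ.pos δ hδ).ne', div_self hδ.ne', ENNReal.ofReal_one, one_mul]
    _ ≤ ENNReal.ofReal (φ a / a) * (ENNReal.ofReal (δ / φ δ) * 1) := by
        gcongr
        exact (emarcFun_le_emarcNorm φ v hδ).trans hnorm
    _ = ENNReal.ofReal (φ a / a * (δ / φ δ)) := by
        rw [mul_one, ENNReal.ofReal_mul (div_pos (hφ.pos a ha) ha).le]

lemma emarcFun_le_of_le {v : ℝ → ℝ} {L t : ℝ} (ht : 0 < t) (hL : ∀ x, |v x| ≤ L) :
    emarcFun φ v t ≤ ENNReal.ofReal (L * φ t) := by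
  have hL0 : 0 ≤ L := (abs_nonneg (v 0)).trans (hL 0)
  calc emarcFun φ v t ≤ ENNReal.ofReal (φ t / t) * (ENNReal.ofReal L * ENNReal.ofReal t) := by
        refine mul_le_mul_right ((rearIntegral_le_of_abs_le hL subset_rfl _).trans ?_) _
        gcongr
        exact min_le_left _ _
    _ = ENNReal.ofReal (L * φ t) := by
        rw [← ENNReal.ofReal_mul hL0, ← ENNReal.ofReal_mul (div_pos (hφ.pos t ht) ht).le]
        congr 1
        field_simp

lemma exists_unit_hump (hh : AEMeasurable h μ₀) (hK : rearIntegral μ₀ h 1 = ⊤) {δ : ℝ}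
    (hδ : 0 < δ) (M : ℝ) : ∃ v L, HumpAbove μ₀ h M v ∧ (∀ x, |v x| ≤ L) ∧
      μ₀ (Function.support v) ≤ ENNReal.ofReal δ ∧ emarcNorm φ v = 1 := by
  obtain ⟨w, L, hw, hwL, hsupp, hC⟩ := exists_hump_of_rearIntegral_eq_top hh hK hδ M
    (ENNReal.ofReal_ne_top (r := δ / φ δ))
  have abs_w (x : ℝ) : |w x| = w x := abs_of_nonneg (hw.nonneg x)
  have w_fin : emarcNorm φ w ≠ ⊤ := ne_top_of_le_ne_top ENNReal.ofReal_ne_top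
    (emarcNorm_le_of_abs_le hφ hδ (fun x => (abs_w x).trans_le (hwL x)) hsupp)
  have one_le : 1 ≤ emarcNorm φ w := calc
    1 = ENNReal.ofReal (φ δ / δ) * ENNReal.ofReal (δ / φ δ) := by
      rw [← ENNReal.ofReal_mul (div_pos (hφ.pos δ hδ) hδ).le, div_mul_div_cancel₀ hδ.ne',
        div_self (hφ.pos δ hδ).ne', ENNReal.ofReal_one]
    _ ≤ emarcFun φ w δ := mul_le_mul_right hC _
    _ ≤ emarcNorm φ w := emarcFun_le_emarcNorm φ w hδ
  let N := (emarcNorm φ w).toReal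
  have hN : 1 ≤ N := (ENNReal.toReal_mono w_fin one_le).trans_eq' ENNReal.toReal_one.symm
  have hN_inv : 0 ≤ N⁻¹ := inv_nonneg.2 (zero_le_one.trans hN)
  have scaled_nonneg (x : ℝ) : 0 ≤ N⁻¹ * w x := mul_nonneg hN_inv (hw.nonneg x)
  have scaled_le (x : ℝ) : N⁻¹ * w x ≤ w x :=
    mul_le_of_le_one_left (hw.nonneg x) (inv_le_one_of_one_le₀ hN)
  refine ⟨fun x => N⁻¹ * w x, L,
    hw.mono (hw.aemeasurable.const_mul _) scaled_nonneg scaled_le, fun x => ?_, ?_, ?_⟩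
  · rw [abs_of_nonneg (scaled_nonneg x)]
    exact (scaled_le x).trans (hwL x)
  · exact (measure_mono fun x (hx : N⁻¹ * w x ≠ 0) => right_ne_zero_of_mul hx).trans hsupp
  · rw [emarcNorm_const_mul hN_inv, ENNReal.ofReal_inv_of_pos (zero_lt_one.trans_le hN),
      ENNReal.ofReal_toReal w_fin, ENNReal.inv_mul_cancel (zero_lt_one.trans_le one_le).ne' w_fin]

lemma exists_localized_hump (hlim : Tendsto (fun t => t / φ t) (𝓝[>] 0) (𝓝 0))
    (hφ0 : Tendsto φ (𝓝[>] 0) (𝓝 0)) (hh : AEMeasurable h μ₀) (hK : rearIntegral μ₀ h 1 = ⊤)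
    {a ε : ℝ} (ha : 0 < a) (hε : 0 < ε) (M : ℝ) :
    ∃ b v, b ∈ Ioc 0 a ∧ HumpAbove μ₀ h M v ∧ IsLocalizedUnit φ b a (ENNReal.ofReal ε) v := by
  have small_tail : Tendsto (fun δ => φ a / a * (δ / φ δ)) (𝓝[>] 0) (𝓝 0) := by
    simpa using hlim.const_mul (φ a / a)
  obtain ⟨δ, hδε, hδ, hδa⟩ := ((small_tail.eventually (ge_mem_nhds hε)).and
    (Ioc_mem_nhdsGT ha)).exists
  obtain ⟨v, L, hv, hL, hsupp, hnorm⟩ := exists_unit_hump hφ hh hK hδ M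
  have small_head : Tendsto (fun t => L * φ t) (𝓝[>] 0) (𝓝 0) := by
    simpa using hφ0.const_mul L
  obtain ⟨b, hb, hbε⟩ := mem_nhdsGT_iff_exists_Ioc_subset.1
    ((small_head.eventually (ge_mem_nhds hε)).and (Ioc_mem_nhdsGT ha))
  refine ⟨b, v, (hbε ⟨hb, le_rfl⟩).2, hv, hnorm, fun t ht htab => ?_⟩
  rcases le_or_gt t b with htb | hbt
  · exact (emarcFun_le_of_le hφ ht hL).trans (ENNReal.ofReal_le_ofReal (hbε ⟨ht, htb⟩).1)
  · exact (emarcFun_le_of_measure_support_le hφ hδ hδa (not_lt.1 fun hta => htab ⟨hbt, hta⟩)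
      hnorm.le hsupp).trans (ENNReal.ofReal_le_ofReal hδε)

end Localization

section LocallyIntegrable

variable {φ h : ℝ → ℝ}

lemma ofReal_two_inv_pow (k : ℕ) : ENNReal.ofReal (2⁻¹ ^ k) = 2⁻¹ ^ k := by
  rw [ENNReal.ofReal_pow (inv_nonneg.2 zero_le_two), ENNReal.ofReal_inv_of_pos two_pos,
    ENNReal.ofReal_ofNat]

lemma tsum_indicator_one_le_one {ι α : Type*} {s : ι → Set α}
    (hs : Pairwise (Function.onFun Disjoint s)) (x : α) :
    ∑' k, (s k).indicator (1 : α → ℝ≥0∞) x ≤ 1 := by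
  by_cases hx : ∃ j, x ∈ s j
  · obtain ⟨j, hj⟩ := hx
    rw [tsum_eq_single j fun k hk =>
      indicator_of_notMem (fun hxk => (hs hk).le_bot ⟨hxk, hj⟩) _]
    exact indicator_le_self' (fun _ _ => zero_le) x
  · push Not at hx
    simp [hx]

lemma emarcNorm_iSup_le_three {v : ℕ → ℝ → ℝ} {b : ℕ → ℝ} (hb : Antitone b)
    (hv : ∀ k : ℕ, HumpAbove μ₀ h k (v k))
    (hloc : ∀ k, IsLocalizedUnit φ (b (k + 1)) (b k) (ENNReal.ofReal (2⁻¹ ^ k)) (v k)) :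
    emarcNorm φ (fun x => ⨆ k, v k x) ≤ 3 := by
  refine emarcNorm_le fun t ht => ?_
  have term_le (k : ℕ) : emarcFun φ (v k) t ≤
      2⁻¹ ^ k + (Ioo (b (k + 1)) (b k)).indicator (1 : ℝ → ℝ≥0∞) t := by
    by_cases htk : t ∈ Ioo (b (k + 1)) (b k)
    · rw [indicator_of_mem htk]
      exact ((emarcFun_le_emarcNorm φ (v k) ht).trans_eq (hloc k).norm_eq_one).trans le_add_self
    · exact ((hloc k).emarcFun_le t ht htk).trans (le_add_right (ofReal_two_inv_pow k).le)
  calc emarcFun φ (fun x => ⨆ k, v k x) t ≤ ∑' k, emarcFun φ (v k) t :=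
        emarcFun_le_tsum (fun x l _ hl => HumpAbove.exists_lt_abs_of_lt_abs_iSup hv hl) t
    _ ≤ ∑' k, (2⁻¹ ^ k + (Ioo (b (k + 1)) (b k)).indicator (1 : ℝ → ℝ≥0∞) t) :=
        ENNReal.tsum_le_tsum term_le
    _ ≤ 2 + 1 := by
        rw [ENNReal.tsum_add, ENNReal.tsum_geometric_two]
        gcongr
        exact tsum_indicator_one_le_one hb.pairwise_disjoint_on_Ioo_succ t
    _ = 3 := two_add_one_eq_three

lemma le_emarcNorm_indicator_one (hφ : QuasiConcave φ) {A : Set ℝ} (hA0 : μ₀ A ≠ 0)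
    (hA : μ₀ A ≠ ⊤) : ENNReal.ofReal (φ (μ₀ A).toReal) ≤ emarcNorm φ (A.indicator 1) := by
  have ht : 0 < (μ₀ A).toReal := ENNReal.toReal_pos hA0 hA
  have one_le : ∀ x ∈ A, 1 ≤ |A.indicator (1 : ℝ → ℝ) x| := fun x hx => by
    rw [indicator_of_mem hx, Pi.one_apply, abs_one]
  calc ENNReal.ofReal (φ (μ₀ A).toReal)
      = ENNReal.ofReal (φ (μ₀ A).toReal / (μ₀ A).toReal) *
          (ENNReal.ofReal 1 * min (ENNReal.ofReal (μ₀ A).toReal) (μ₀ A)) := by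
        rw [ENNReal.ofReal_one, one_mul, min_eq_left ENNReal.ofReal_toReal_le,
          ← ENNReal.ofReal_mul (div_pos (hφ.pos _ ht) ht).le, div_mul_cancel₀ _ ht.ne']
    _ ≤ emarcFun φ (A.indicator 1) (μ₀ A).toReal :=
        mul_le_mul_right (le_rearIntegral_of_le_abs one_le _) _
    _ ≤ emarcNorm φ (A.indicator 1) := emarcFun_le_emarcNorm _ _ ht

lemma measure_support_iSup_indicator_le {α : Type*} [MeasurableSpace α] {μ : Measure α}
    {A : ℕ → Set α} (hA : ∀ k, μ (A k) ≤ ENNReal.ofReal (2⁻¹ ^ k)) :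
    μ (Function.support fun x => ⨆ k, (A k).indicator (1 : α → ℝ) x) ≤ ENNReal.ofReal 2 := by
  have subset : (Function.support fun x => ⨆ k, (A k).indicator (1 : α → ℝ) x) ⊆ ⋃ k, A k := by
    intro x hx
    by_contra hxA
    refine hx ?_
    simp only [mem_iUnion, not_exists] at hxA
    simp only [indicator_of_notMem (hxA _), ciSup_const]
  calc μ (Function.support fun x => ⨆ k, (A k).indicator (1 : α → ℝ) x)
      ≤ ∑' k, μ (A k) := (measure_mono subset).trans (measure_iUnion_le A)
    _ ≤ ∑' k, 2⁻¹ ^ k := ENNReal.tsum_le_tsum fun k => (hA k).trans_eq (ofReal_two_inv_pow k)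
    _ = ENNReal.ofReal 2 := by rw [ENNReal.tsum_geometric_two, ENNReal.ofReal_ofNat]

variable (hφ : QuasiConcave φ) (hh : h ∈ ocSet μ₀ (marcMem φ) (marcNorm φ))
include hφ hh

lemma rearIntegral_ne_top_of_tendsto_zero (hlim : Tendsto (fun t => t / φ t) (𝓝[>] 0) (𝓝 0))
    (hφ0 : Tendsto φ (𝓝[>] 0) (𝓝 0)) : rearIntegral μ₀ h 1 ≠ ⊤ := by
  intro hK
  obtain ⟨b, -, step⟩ := exists_seq_of_step (P := fun (_ : ℕ) (b : ℝ) => 0 < b)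
    (R := fun (k : ℕ) (a b : ℝ) => b ≤ a ∧ ∃ v, HumpAbove μ₀ h k v ∧
      IsLocalizedUnit φ b a (ENNReal.ofReal (2⁻¹ ^ k)) v) ⟨1, one_pos⟩
    fun k a ha => by
      obtain ⟨b, v, hb, hv, hloc⟩ := exists_localized_hump hφ hlim hφ0 hh.1.1 hK ha
        (pow_pos (inv_pos.2 two_pos) k) k
      exact ⟨b, hb.1, hb.2, v, hv, hloc⟩
  choose hb v hv hloc using step
  have norm_lim := tendsto_emarcNorm_of_humps hφ hh hv
    (ne_top_of_le_ne_top (by finiteness)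
      (emarcNorm_iSup_le_three (antitone_nat_of_succ_le hb) hv hloc))
  simp only [(hloc _).norm_eq_one] at norm_lim
  exact one_ne_zero (tendsto_nhds_unique tendsto_const_nhds norm_lim)

lemma rearIntegral_ne_top_of_pos_le {c : ℝ} (hc : 0 < c) (hcφ : ∀ t, 0 < t → c ≤ φ t) :
    rearIntegral μ₀ h 1 ≠ ⊤ := by
  intro hK
  choose w _ hw _ hsupp hnorm using fun k : ℕ =>
    exists_unit_hump hφ hh.1.1 hK (pow_pos (inv_pos.2 two_pos) k) (k + 1)
  let v (k : ℕ) : ℝ → ℝ := (Function.support (w k)).indicator 1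
  have hv (k : ℕ) : HumpAbove μ₀ h k (v k) :=
    ((hw k).indicator_support (le_add_of_nonneg_left k.cast_nonneg)).mono_height
      (le_add_of_nonneg_right zero_le_one)
  have c_le (k : ℕ) : ENNReal.ofReal c ≤ emarcNorm φ (v k) := by
    have supp_ne_zero : μ₀ (Function.support (w k)) ≠ 0 := fun h0 =>
      one_ne_zero ((hnorm k).symm.trans (emarcNorm_eq_zero_of_ae_eq_zero (ae_iff.2 h0)))
    have supp_ne_top := ne_top_of_le_ne_top ENNReal.ofReal_ne_top (hsupp k)
    exact (ENNReal.ofReal_le_ofReal (hcφ _ (ENNReal.toReal_pos supp_ne_zero supp_ne_top))).trans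
      (le_emarcNorm_indicator_one hφ supp_ne_zero supp_ne_top)
  have sup_abs_le (x : ℝ) : |⨆ k, v k x| ≤ 1 := by
    rw [abs_of_nonneg (HumpAbove.iSup_nonneg hv x)]
    exact ciSup_le fun k => indicator_le_self' (fun _ _ => zero_le_one) x
  have sup_fin : emarcNorm φ (fun x => ⨆ k, v k x) ≠ ⊤ :=
    ne_top_of_le_ne_top ENNReal.ofReal_ne_top (emarcNorm_le_of_abs_le hφ two_pos sup_abs_le
      (measure_support_iSup_indicator_le hsupp))
  exact (ENNReal.ofReal_pos.2 hc).not_ge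
    (ge_of_tendsto' (tendsto_emarcNorm_of_humps hφ hh hv sup_fin) c_le)

lemma emarcNorm_ne_top_of_mem_ocSet (hlim : Tendsto (fun t => t / φ t) (𝓝[>] 0) (𝓝 0)) :
    emarcNorm φ h ≠ ⊤ := by
  refine emarcNorm_ne_top_of_marcMem hφ hh.1 ?_
  rcases hφ.tendsto_nhdsGT_zero_or_exists_pos_le with hφ0 | ⟨c, hc, hcφ⟩
  · exact rearIntegral_ne_top_of_tendsto_zero hφ hh hlim hφ0
  · exact rearIntegral_ne_top_of_pos_le hφ hh hc hcφ

end LocallyIntegrable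

lemma exists_forall_mul_le {φ : ℝ → ℝ} {c d : ℝ} (hc : 0 < c) (hcφ : ∀ t, 0 < t → c ≤ φ t)
    (hd0 : 0 < d) (hd1 : d < 1) : ∃ r, 0 < r ∧ ∀ b, 0 < b → d * φ r ≤ φ b := by
  have le_inf : c ≤ sInf (φ '' Ioi 0) :=
    le_csInf (nonempty_Ioi.image φ) (forall_mem_image.2 fun t ht => hcφ t ht)
  have inf_lt : sInf (φ '' Ioi 0) < sInf (φ '' Ioi 0) / d :=
    (lt_div_iff₀ hd0).2 (mul_lt_of_lt_one_right (hc.trans_le le_inf) hd1)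
  obtain ⟨_, ⟨r, hr, rfl⟩, hrd⟩ := exists_lt_of_csInf_lt (nonempty_Ioi.image φ) inf_lt
  refine ⟨r, hr, fun b hb => ?_⟩
  calc d * φ r ≤ sInf (φ '' Ioi 0) := ((lt_div_iff₀' hd0).1 hrd).le
    _ ≤ φ b := csInf_le ⟨c, forall_mem_image.2 fun t ht => hcφ t ht⟩ (mem_image_of_mem φ hb)

namespace QuasiConcave

variable {φ : ℝ → ℝ} (hφ : QuasiConcave φ)
include hφ

lemma sub_mul_div_le {a b c s : ℝ} (hb : 0 < b) (hc : 0 ≤ c) (hs : s ∈ Ioc b a) {c' : ℝ}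
    (hc' : c * φ s ≤ c' * φ a) : (s - b) * (c / φ a) ≤ c' * (s / φ s) := by
  have hs0 : 0 < s := hb.trans hs.1
  have ha0 : 0 < a := hs0.trans_le hs.2
  calc (s - b) * (c / φ a) ≤ s * (c' / φ s) := by
        refine mul_le_mul (sub_le_self s hb.le) ?_ (div_nonneg hc (hφ.pos a ha0).le) hs0.le
        exact (div_le_div_iff₀ (hφ.pos a ha0) (hφ.pos s hs0)).2 hc'
    _ = c' * (s / φ s) := by ring

lemma eventually_segment_le_of_tendsto_zero (hlim : Tendsto (fun t => t / φ t) (𝓝[>] 0) (𝓝 0))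
    (hφ0 : Tendsto φ (𝓝[>] 0) (𝓝 0)) {a c d : ℝ} (ha : 0 < a) (hc0 : 0 ≤ c) (hc1 : c < 1)
    (hd0 : 0 ≤ d) (hd1 : d < 1) :
    ∀ᶠ b in 𝓝[>] 0, ∀ s ∈ Ioc b a, d * (b / φ b) + (s - b) * (c / φ a) ≤ s / φ s := by
  obtain ⟨r, hr, hr0⟩ := ((hφ0.eventually (ge_mem_nhds
    (mul_pos (sub_pos.2 hd1) (hφ.pos a ha)))).and self_mem_nhdsWithin).exists
  filter_upwards [self_mem_nhdsWithin, hlim.eventually (ge_mem_nhds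
    (mul_pos (sub_pos.2 hc1) (hφ.self_div_pos hr0)))] with b hb0 hb s hs
  have hs0 : 0 < s := hb0.trans hs.1
  have hφs : 0 < φ s := hφ.pos s hs0
  have hφsa : φ s ≤ φ a := hφ.monotoneOn hs0 ha hs.2
  have hψb : 0 < b / φ b := hφ.self_div_pos hb0
  rcases le_total r s with hrs | hsr
  · calc d * (b / φ b) + (s - b) * (c / φ a)
        ≤ (1 - c) * (r / φ r) + c * (s / φ s) :=
          add_le_add ((mul_le_of_le_one_left hψb.le hd1.le).trans hb)
            (hφ.sub_mul_div_le hb0 hc0 hs (mul_le_mul_of_nonneg_left hφsa hc0))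
      _ ≤ (1 - c) * (s / φ s) + c * (s / φ s) :=
          add_le_add (mul_le_mul_of_nonneg_left (hφ.self_div_le_self_div hr0 hrs)
            (sub_nonneg.2 hc1.le)) le_rfl
      _ = s / φ s := by ring
  · have small : c * φ s ≤ (1 - d) * φ a :=
      (mul_le_of_le_one_left hφs.le hc1.le).trans ((hφ.monotoneOn hs0 hr0 hsr).trans hr)
    calc d * (b / φ b) + (s - b) * (c / φ a) ≤ d * (s / φ s) + (1 - d) * (s / φ s) :=
          add_le_add (mul_le_mul_of_nonneg_left (hφ.self_div_le_self_div hb0 hs.1.le) hd0)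
            (hφ.sub_mul_div_le hb0 hc0 hs small)
      _ = s / φ s := by ring

lemma eventually_segment_le_of_pos_le {e : ℝ} (he : 0 < e) (heφ : ∀ t, 0 < t → e ≤ φ t)
    {c d : ℝ} (hc1 : c ≤ 1) (hd0 : 0 < d) (hd1 : d < 1) :
    ∀ᶠ a in 𝓝[>] 0, ∀ᶠ b in 𝓝[>] 0, ∀ s ∈ Ioc b a,
      d * (b / φ b) + (s - b) * (c / φ a) ≤ s / φ s := by
  obtain ⟨r, hr0, hr⟩ := exists_forall_mul_le he heφ hd0 hd1
  filter_upwards [Ioc_mem_nhdsGT hr0] with a ha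
  filter_upwards [self_mem_nhdsWithin] with b hb0 s hs
  have hs0 : 0 < s := lt_trans hb0 hs.1
  have hφs := hφ.pos s hs0
  have tail : d * (b / φ b) ≤ b / φ s := by
    rw [mul_div_left_comm, div_eq_mul_inv b]
    refine mul_le_mul_of_nonneg_left ?_ (le_of_lt hb0)
    rw [← one_div, div_le_div_iff₀ (hφ.pos b hb0) hφs, one_mul]
    exact (mul_le_mul_of_nonneg_left (hφ.monotoneOn hs0 hr0 (hs.2.trans ha.2)) hd0.le).trans
      (hr b hb0)
  have segment : (s - b) * (c / φ a) ≤ (s - b) * (1 / φ s) :=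
    mul_le_mul_of_nonneg_left
      (div_le_div₀ zero_le_one hc1 hφs (hφ.monotoneOn hs0 ha.1 hs.2)) (sub_nonneg.2 hs.1.le)
  calc d * (b / φ b) + (s - b) * (c / φ a) ≤ b / φ s + (s - b) * (1 / φ s) :=
        add_le_add tail segment
    _ = s / φ s := by ring

lemma eventually_segment_le (hlim : Tendsto (fun t => t / φ t) (𝓝[>] 0) (𝓝 0)) {c d : ℝ}
    (hc0 : 0 ≤ c) (hc1 : c < 1) (hd0 : 0 < d) (hd1 : d < 1) :
    ∀ᶠ a in 𝓝[>] 0, ∀ᶠ b in 𝓝[>] 0, ∀ s ∈ Ioc b a,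
      d * (b / φ b) + (s - b) * (c / φ a) ≤ s / φ s := by
  rcases hφ.tendsto_nhdsGT_zero_or_exists_pos_le with hφ0 | ⟨e, he, heφ⟩
  · filter_upwards [self_mem_nhdsWithin] with a ha using
      hφ.eventually_segment_le_of_tendsto_zero hlim hφ0 ha hc0 hc1 hd0.le hd1
  · exact hφ.eventually_segment_le_of_pos_le he heφ hc1.le hd0 hd1

end QuasiConcave

/-- Nodes `t 0 > t 1 > ⋯` decreasing so fast that the function equal to `q k / φ (t k)` on
`(t (k + 1), t k]` has integral at most `s / φ s` over `(0, s]`. -/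
structure IsNodeSeq (φ : ℝ → ℝ) (q t : ℕ → ℝ) : Prop where
  pos : ∀ k, 0 < t k
  succ_le : ∀ k, t (k + 1) ≤ (1 - q k) * t k
  self_div_succ_le : ∀ k, t (k + 1) / φ (t (k + 1)) ≤ (1 - q k) / 2 * (t k / φ (t k))
  segment_le : ∀ k, ∀ s ∈ Ioc (t (k + 1)) (t k),
    (1 + q (k + 1)) / 2 * (t (k + 1) / φ (t (k + 1))) + (s - t (k + 1)) * (q k / φ (t k)) ≤ s / φ s

lemma exists_isNodeSeq {φ : ℝ → ℝ} {q : ℕ → ℝ} (hφ : QuasiConcave φ)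
    (hlim : Tendsto (fun t => t / φ t) (𝓝[>] 0) (𝓝 0)) (hq0 : ∀ k, 0 ≤ q k) (hq1 : ∀ k, q k < 1) :
    ∃ t, IsNodeSeq φ q t := by
  let P (k : ℕ) (a : ℝ) : Prop := 0 < a ∧ ∀ᶠ b in 𝓝[>] 0, ∀ s ∈ Ioc b a,
    (1 + q (k + 1)) / 2 * (b / φ b) + (s - b) * (q k / φ a) ≤ s / φ s
  have good (k : ℕ) : ∀ᶠ a in 𝓝[>] 0, P k a :=
    eventually_mem_nhdsWithin.and (hφ.eventually_segment_le hlim (hq0 k) (hq1 k)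
      (by linarith [hq0 (k + 1)]) (by linarith [hq1 (k + 1)]))
  obtain ⟨t, ht, step⟩ := exists_seq_of_step (P := P) (good 0).exists (R := fun k a b =>
    b ≤ (1 - q k) * a ∧ b / φ b ≤ (1 - q k) / 2 * (a / φ a) ∧ ∀ s ∈ Ioc b a,
      (1 + q (k + 1)) / 2 * (b / φ b) + (s - b) * (q k / φ a) ≤ s / φ s) fun k a ⟨ha, hseg⟩ => by
    have gap_pos : 0 < 1 - q k := sub_pos.2 (hq1 k)
    have close : ∀ᶠ b in 𝓝[>] 0, b ∈ Ioc 0 ((1 - q k) * a) := Ioc_mem_nhdsGT (mul_pos gap_pos ha)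
    have decay := hlim.eventually (ge_mem_nhds (mul_pos (half_pos gap_pos) (hφ.self_div_pos ha)))
    obtain ⟨b, ⟨hb, hba⟩, hψ, hs⟩ := ((good (k + 1)).and close |>.and (decay.and hseg)).exists
    exact ⟨b, hb, hba.2, hψ, hs⟩
  exact ⟨t, fun k => (ht k).1, fun k => (step k).1, fun k => (step k).2.1, fun k => (step k).2.2⟩

lemma tsum_le_of_add_succ_le {a e : ℕ → ℝ≥0∞} (h : ∀ j, a j + e (j + 1) ≤ e j) :
    ∑' j, a j ≤ e 0 := by
  have partial_sum (n : ℕ) : ∑ j ∈ Finset.range n, a j + e n ≤ e 0 := by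
    induction n with
    | zero => simp
    | succ n ih =>
      rw [Finset.sum_range_succ, add_assoc]
      exact (add_le_add le_rfl (h n)).trans ih
  exact ENNReal.tsum_le_of_sum_range_le fun n => le_self_add.trans (partial_sum n)

/-- The index `k` of the interval `(t (k + 1), t k]` containing `s`, for nodes `t` decreasing
to `0`. It is `0` beyond `t 0`. -/
noncomputable def nodeIdx (t : ℕ → ℝ) (s : ℝ) : ℕ := sInf {k | t (k + 1) < s}

/-- The step function equal to `q k / φ (t k)` on `(t (k + 1), t k]`. -/
noncomputable def stepFun (φ : ℝ → ℝ) (q t : ℕ → ℝ) (s : ℝ) : ℝ :=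
  q (nodeIdx t s) / φ (t (nodeIdx t s))

lemma le_of_nodeIdx_ne_zero {t : ℕ → ℝ} {s : ℝ} (h : nodeIdx t s ≠ 0) :
    s ≤ t (nodeIdx t s) := by
  have pred_notMem := Nat.notMem_of_lt_sInf (Nat.sub_one_lt h)
  rw [mem_ofPred_eq, not_lt] at pred_notMem
  exact pred_notMem.trans_eq (congrArg t (Nat.sub_one_add_one h))

lemma setLIntegral_stepFun {φ : ℝ → ℝ} {q t : ℕ → ℝ} {k : ℕ} {a b : ℝ}
    (h : ∀ s ∈ Ioc a b, nodeIdx t s = k) (hab : a ≤ b) :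
    ∫⁻ s in Ioc a b, ENNReal.ofReal (stepFun φ q t s) =
      ENNReal.ofReal ((b - a) * (q k / φ (t k))) := by
  rw [setLIntegral_congr_fun (g := fun _ => ENNReal.ofReal (q k / φ (t k))) measurableSet_Ioc
    fun s hs => by simp only [stepFun, h s hs], setLIntegral_const, Real.volume_Ioc, mul_comm,
    ENNReal.ofReal_mul (sub_nonneg.2 hab)]

namespace IsNodeSeq

variable {φ : ℝ → ℝ} {q t : ℕ → ℝ} (ht : IsNodeSeq φ q t)
include ht

section

variable (hq0 : ∀ k, 0 ≤ q k)
include hq0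

lemma antitone : Antitone t := antitone_nat_of_succ_le fun k =>
  (ht.succ_le k).trans (mul_le_of_le_one_left (ht.pos k).le (sub_le_self 1 (hq0 k)))

lemma nodeIdx_eq {k : ℕ} {s : ℝ} (hs : s ∈ Ioc (t (k + 1)) (t k)) : nodeIdx t s = k := by
  refine (Nat.sInf_le hs.1).antisymm (le_csInf ⟨k, hs.1⟩ fun j (hj : t (j + 1) < s) => ?_)
  by_contra! hjk
  exact (hj.trans_le hs.2).not_ge (ht.antitone hq0 hjk)

variable (hφ : QuasiConcave φ)
include hφ

lemma self_div_le_pow (k : ℕ) : t k / φ (t k) ≤ 2⁻¹ ^ k * (t 0 / φ (t 0)) := by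
  induction k with
  | zero => simp
  | succ k ih =>
    calc t (k + 1) / φ (t (k + 1)) ≤ (1 - q k) / 2 * (t k / φ (t k)) := ht.self_div_succ_le k
      _ ≤ 2⁻¹ * (t k / φ (t k)) := by
        refine mul_le_mul_of_nonneg_right ?_ (hφ.self_div_pos (ht.pos k)).le
        linarith [hq0 k]
      _ ≤ 2⁻¹ * (2⁻¹ ^ k * (t 0 / φ (t 0))) := by gcongr
      _ = 2⁻¹ ^ (k + 1) * (t 0 / φ (t 0)) := by ring

lemma exists_lt {s : ℝ} (hs : 0 < s) : ∃ k, t (k + 1) < s := by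
  by_contra! hle
  have bound_lim : Tendsto (fun k : ℕ => (2⁻¹ : ℝ) ^ (k + 1) * (t 0 / φ (t 0))) atTop (𝓝 0) := by
    simpa using ((tendsto_pow_atTop_nhds_zero_of_lt_one (by norm_num) (by norm_num :
      (2⁻¹ : ℝ) < 1)).comp (tendsto_add_atTop_nat 1)).mul_const (t 0 / φ (t 0))
  exact (hφ.self_div_pos hs).not_ge (ge_of_tendsto' bound_lim fun k =>
    (hφ.self_div_le_self_div hs (hle k)).trans (ht.self_div_le_pow hq0 hφ (k + 1)))

lemma lt_of_nodeIdx {s : ℝ} (hs : 0 < s) : t (nodeIdx t s + 1) < s :=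
  Nat.sInf_mem (ht.exists_lt hq0 hφ hs)

lemma antitoneOn_nodeIdx : AntitoneOn (nodeIdx t) (Ioi 0) := fun _ hx _ _ hxy =>
  Nat.sInf_le ((ht.lt_of_nodeIdx hq0 hφ hx).trans_le hxy)

lemma nodeIdx_eq_of_mem_Ioc {s y : ℝ} (hy : y ∈ Ioc (t (nodeIdx t s + 1)) s) :
    nodeIdx t y = nodeIdx t s := by
  have hy0 : 0 < y := (ht.pos _).trans hy.1
  exact (Nat.sInf_le hy.1).antisymm
    (ht.antitoneOn_nodeIdx hq0 hφ hy0 (hy0.trans_le hy.2) hy.2)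

lemma Ioc_subset_iUnion (m : ℕ) : Ioc 0 (t m) ⊆ ⋃ j, Ioc (t (m + j + 1)) (t (m + j)) := by
  intro s hs
  have hlt := ht.lt_of_nodeIdx hq0 hφ hs.1
  obtain ⟨j, hj⟩ := Nat.exists_eq_add_of_le
    (Nat.lt_succ_iff.1 ((ht.antitone hq0).reflect_lt (hlt.trans_le hs.2)))
  refine mem_iUnion.2 ⟨j, hj ▸ hlt, ?_⟩
  rcases j.eq_zero_or_pos with rfl | hj0
  · exact hs.2
  · exact hj ▸ le_of_nodeIdx_ne_zero (by lia)

lemma stepFun_nonneg (s : ℝ) : 0 ≤ stepFun φ q t s :=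
  div_nonneg (hq0 _) (hφ.pos _ (ht.pos _)).le

lemma antitoneOn_stepFun (hq : Monotone q) : AntitoneOn (stepFun φ q t) (Ioi 0) := by
  have level_mono : Monotone fun k => q k / φ (t k) := fun i j hij =>
    div_le_div₀ (hq0 j) (hq hij) (hφ.pos _ (ht.pos j))
      (hφ.monotoneOn (ht.pos j) (ht.pos i) (ht.antitone hq0 hij))
  exact level_mono.comp_antitoneOn (ht.antitoneOn_nodeIdx hq0 hφ)

end

variable (hφ : QuasiConcave φ)
include hφ

lemma mass_add_le {k : ℕ} (hq0 : 0 ≤ q k) (hq1 : q (k + 1) ≤ 1) :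
    (t k - t (k + 1)) * (q k / φ (t k)) + (1 + q (k + 1)) / 2 * (t (k + 1) / φ (t (k + 1))) ≤
      (1 + q k) / 2 * (t k / φ (t k)) := by
  calc (t k - t (k + 1)) * (q k / φ (t k)) + (1 + q (k + 1)) / 2 * (t (k + 1) / φ (t (k + 1)))
      ≤ t k * (q k / φ (t k)) + 1 * ((1 - q k) / 2 * (t k / φ (t k))) := by
        refine add_le_add (mul_le_mul_of_nonneg_right (sub_le_self _ (ht.pos _).le)
          (div_nonneg hq0 (hφ.pos _ (ht.pos k)).le)) ?_
        exact mul_le_mul (by linarith) (ht.self_div_succ_le k)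
          (hφ.self_div_pos (ht.pos _)).le zero_le_one
    _ = (1 + q k) / 2 * (t k / φ (t k)) := by ring

lemma setLIntegral_stepFun_le (hq0 : ∀ k, 0 ≤ q k) (hq1 : ∀ k, q k ≤ 1) (m : ℕ) :
    ∫⁻ s in Ioc 0 (t m), ENNReal.ofReal (stepFun φ q t s) ≤
      ENNReal.ofReal ((1 + q m) / 2 * (t m / φ (t m))) := by
  have level_nonneg (k : ℕ) : 0 ≤ (t k - t (k + 1)) * (q k / φ (t k)) :=
    mul_nonneg (sub_nonneg.2 (ht.antitone hq0 k.le_succ))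
      (div_nonneg (hq0 k) (hφ.pos _ (ht.pos k)).le)
  have tail_nonneg (k : ℕ) : 0 ≤ (1 + q k) / 2 * (t k / φ (t k)) :=
    mul_nonneg (by linarith [hq0 k]) (hφ.self_div_pos (ht.pos k)).le
  refine (lintegral_mono_set (ht.Ioc_subset_iUnion hq0 hφ m)).trans
    ((lintegral_iUnion_le _ _).trans ?_)
  refine tsum_le_of_add_succ_le
    (e := fun j => ENNReal.ofReal ((1 + q (m + j)) / 2 * (t (m + j) / φ (t (m + j))))) fun j => ?_
  rw [setLIntegral_stepFun (fun s => ht.nodeIdx_eq hq0) (ht.antitone hq0 (m + j).le_succ),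
    ← ENNReal.ofReal_add (level_nonneg _) (tail_nonneg _)]
  exact ENNReal.ofReal_le_ofReal (ht.mass_add_le hφ (hq0 _) (hq1 _))

lemma setLIntegral_Ioo_stepFun_le (hq0 : ∀ k, 0 ≤ q k) (hq1 : ∀ k, q k ≤ 1) (hq00 : q 0 = 0) {s : ℝ}
    (hs : 0 < s) :
    ∫⁻ y in Ioo 0 s, ENNReal.ofReal (stepFun φ q t y) ≤ ENNReal.ofReal (s / φ s) := by
  set k := nodeIdx t s
  have node_lt : t (k + 1) < s := ht.lt_of_nodeIdx hq0 hφ hs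
  have tail_nonneg : 0 ≤ (1 + q (k + 1)) / 2 * (t (k + 1) / φ (t (k + 1))) :=
    mul_nonneg (by linarith [hq0 (k + 1)]) (hφ.self_div_pos (ht.pos _)).le
  have mass_le : (1 + q (k + 1)) / 2 * (t (k + 1) / φ (t (k + 1))) +
      (s - t (k + 1)) * (q k / φ (t k)) ≤ s / φ s := by
    rcases eq_or_ne k 0 with hk0 | hk0
    · rw [hk0, zero_add] at node_lt
      rw [hk0, hq00, zero_div, mul_zero, add_zero, zero_add]
      exact (mul_le_of_le_one_left (hφ.self_div_pos (ht.pos _)).le (by linarith [hq1 1])).trans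
        (hφ.self_div_le_self_div (ht.pos _) node_lt.le)
    · exact ht.segment_le k s ⟨node_lt, le_of_nodeIdx_ne_zero hk0⟩
  calc ∫⁻ y in Ioo 0 s, ENNReal.ofReal (stepFun φ q t y)
      ≤ ∫⁻ y in Ioc 0 (t (k + 1)) ∪ Ioc (t (k + 1)) s, ENNReal.ofReal (stepFun φ q t y) := by
        rw [Ioc_union_Ioc_eq_Ioc (ht.pos _).le node_lt.le]
        exact lintegral_mono_set Ioo_subset_Ioc_self
    _ ≤ ENNReal.ofReal ((1 + q (k + 1)) / 2 * (t (k + 1) / φ (t (k + 1)))) +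
        ENNReal.ofReal ((s - t (k + 1)) * (q k / φ (t k))) := by
        refine (lintegral_union_le _ _ _).trans
          (add_le_add (ht.setLIntegral_stepFun_le hφ hq0 hq1 (k + 1)) ?_)
        exact (setLIntegral_stepFun (fun y => ht.nodeIdx_eq_of_mem_Ioc hq0 hφ) node_lt.le).le
    _ ≤ ENNReal.ofReal (s / φ s) := by
        rw [← ENNReal.ofReal_add tail_nonneg (mul_nonneg (sub_nonneg.2 node_lt.le)
          (div_nonneg (hq0 k) (hφ.pos _ (ht.pos k)).le))]
        exact ENNReal.ofReal_le_ofReal mass_le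

lemma emarcNorm_stepFun_le_one (hq1 : ∀ k, q k ≤ 1) (hq00 : q 0 = 0) (hq : Monotone q) :
    emarcNorm φ (stepFun φ q t) ≤ 1 := by
  have hq0 (k : ℕ) : 0 ≤ q k := hq00.symm.trans_le (hq k.zero_le)
  refine emarcNorm_le fun s hs => ?_
  calc emarcFun φ (stepFun φ q t) s
      ≤ ENNReal.ofReal (φ s / s) * ENNReal.ofReal (s / φ s) := mul_le_mul_right
        ((rearIntegral_le_of_antitoneOn (ht.stepFun_nonneg hq0 hφ)
          (ht.antitoneOn_stepFun hq0 hφ hq) hs).trans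
          (ht.setLIntegral_Ioo_stepFun_le hφ hq0 hq1 hq00 hs)) _
    _ = 1 := by
      rw [← ENNReal.ofReal_mul (div_pos (hφ.pos s hs) hs).le, div_mul_div_cancel₀ hs.ne',
        div_self (hφ.pos s hs).ne', ENNReal.ofReal_one]

lemma sq_le_emarcNorm_indicator (hq0 : ∀ k, 0 ≤ q k) (k : ℕ) :
    ENNReal.ofReal (q k ^ 2) ≤ emarcNorm φ ((nodeIdx t ⁻¹' {k}).indicator (stepFun φ q t)) := by
  have hφk : 0 < φ (t k) := hφ.pos _ (ht.pos k)
  have level_nonneg : 0 ≤ q k / φ (t k) := div_nonneg (hq0 k) hφk.le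
  have level_le (s : ℝ) (hs : s ∈ Ioc (t (k + 1)) (t k)) :
      q k / φ (t k) ≤ |(nodeIdx t ⁻¹' {k}).indicator (stepFun φ q t) s| := by
    have idx_eq := ht.nodeIdx_eq hq0 hs
    rw [indicator_of_mem (show s ∈ nodeIdx t ⁻¹' {k} from idx_eq), stepFun, idx_eq]
    exact le_abs_self _
  have measure_eq : μ₀ (Ioc (t (k + 1)) (t k)) = ENNReal.ofReal (t k - t (k + 1)) := by
    rw [Measure.restrict_apply measurableSet_Ioc, inter_eq_left.2
      (Ioc_subset_Ioi_self.trans (Ioi_subset_Ioi (ht.pos _).le)), Real.volume_Ioc]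
  calc ENNReal.ofReal (q k ^ 2)
      = ENNReal.ofReal (φ (t k) / t k * (q k / φ (t k) * (q k * t k))) := by
        congr 1
        field_simp [(ht.pos k).ne']
    _ ≤ ENNReal.ofReal (φ (t k) / t k * (q k / φ (t k) * (t k - t (k + 1)))) := by
        have := ht.succ_le k
        have := ht.pos k
        gcongr
        linarith
    _ = ENNReal.ofReal (φ (t k) / t k) * (ENNReal.ofReal (q k / φ (t k)) *
          min (ENNReal.ofReal (t k)) (μ₀ (Ioc (t (k + 1)) (t k)))) := by
        rw [ENNReal.ofReal_mul (div_pos hφk (ht.pos k)).le, ENNReal.ofReal_mul level_nonneg,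
          measure_eq, min_eq_right (ENNReal.ofReal_le_ofReal (sub_le_self _ (ht.pos _).le))]
    _ ≤ emarcFun φ ((nodeIdx t ⁻¹' {k}).indicator (stepFun φ q t)) (t k) :=
        mul_le_mul_right (le_rearIntegral_of_le_abs level_le _) _
    _ ≤ _ := emarcFun_le_emarcNorm _ _ (ht.pos k)

end IsNodeSeq

/-- A nonnegative `g` in the unit ball of `M_φ`, cut into the countably many disjoint pieces
`g · 1_{idx = k}`, whose norms tend to `1` as `k → ∞`. -/
structure HasUnitPieces (φ g : ℝ → ℝ) (idx : ℝ → ℕ) : Prop where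
  nonneg : ∀ s, 0 ≤ g s
  aemeasurable : AEMeasurable g μ₀
  aemeasurable_idx : AEMeasurable idx μ₀
  norm_le_one : emarcNorm φ g ≤ 1
  tendsto_piece : Tendsto (fun k => emarcNorm φ ((idx ⁻¹' {k}).indicator g)) atTop (𝓝 1)

lemma exists_hasUnitPieces {φ : ℝ → ℝ} (hφ : QuasiConcave φ)
    (hlim : Tendsto (fun t => t / φ t) (𝓝[>] 0) (𝓝 0)) : ∃ g idx, HasUnitPieces φ g idx := by
  set q : ℕ → ℝ := fun k => 1 - 1 / ((k : ℝ) + 1)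
  have hq : Monotone q := fun i j hij => sub_le_sub_left (Nat.one_div_le_one_div hij) 1
  have hq00 : q 0 = 0 := by simp [q]
  have hq0 (k : ℕ) : 0 ≤ q k := hq00.symm.trans_le (hq k.zero_le)
  have hq1 (k : ℕ) : q k < 1 := sub_lt_self 1 Nat.one_div_pos_of_nat
  have q_lim : Tendsto q atTop (𝓝 1) := by
    simpa only [sub_zero] using (tendsto_one_div_add_atTop_nhds_zero_nat (𝕜 := ℝ)).const_sub 1
  obtain ⟨t, ht⟩ := exists_isNodeSeq hφ hlim hq0 hq1
  have norm_le : emarcNorm φ (stepFun φ q t) ≤ 1 :=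
    ht.emarcNorm_stepFun_le_one hφ (fun k => (hq1 k).le) hq00 hq
  have sq_lim : Tendsto (fun k => ENNReal.ofReal (q k ^ 2)) atTop (𝓝 1) := by
    simpa using ENNReal.tendsto_ofReal (q_lim.pow 2)
  refine ⟨stepFun φ q t, nodeIdx t, ht.stepFun_nonneg hq0 hφ,
    aemeasurable_restrict_of_antitoneOn measurableSet_Ioi (ht.antitoneOn_stepFun hq0 hφ hq),
    aemeasurable_restrict_of_antitoneOn measurableSet_Ioi (ht.antitoneOn_nodeIdx hq0 hφ),
    norm_le, ?_⟩
  refine tendsto_of_tendsto_of_tendsto_of_le_of_le sq_lim tendsto_const_nhds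
    (ht.sq_le_emarcNorm_indicator hφ hq0) fun k => (emarcNorm_mono ?_).trans norm_le
  exact ae_of_all _ fun s => norm_indicator_le_norm_self (stepFun φ q t) s

/-- The operator `ℓ∞ → M_φ` behind the lattice copy: `x n` multiplies all the pieces of `g` with
index `Nat.pair n j`, `j ∈ ℕ`, so that every coordinate controls pieces of norm close to `1`. -/
def pieceMul (g : ℝ → ℝ) (idx : ℝ → ℕ) (x : ℕ → ℝ) (s : ℝ) : ℝ := x (Nat.unpair (idx s)).1 * g s

namespace HasUnitPieces

variable {φ g : ℝ → ℝ} {idx : ℝ → ℕ} (hg : HasUnitPieces φ g idx)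
include hg

lemma aemeasurable_pieceMul (x : ℕ → ℝ) : AEMeasurable (pieceMul g idx x) μ₀ :=
  ((measurable_from_nat (f := fun k => x (Nat.unpair k).1)).comp_aemeasurable
    hg.aemeasurable_idx).mul hg.aemeasurable

lemma abs_le_emarcNorm_pieceMul (x : ℕ → ℝ) (n : ℕ) :
    ENNReal.ofReal |x n| ≤ emarcNorm φ (pieceMul g idx x) := by
  have pair_lim : Tendsto (Nat.pair n) atTop atTop :=
    tendsto_atTop_mono (Nat.right_le_pair n) tendsto_id
  have piece_lim := ENNReal.Tendsto.const_mul (hg.tendsto_piece.comp pair_lim)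
    (Or.inr (ENNReal.ofReal_ne_top (r := |x n|)))
  rw [mul_one] at piece_lim
  refine le_of_tendsto' piece_lim fun j => ?_
  rw [Function.comp_apply, ← emarcNorm_const_mul (abs_nonneg _)]
  refine emarcNorm_mono (ae_of_all _ fun s => ?_)
  by_cases hs : idx s = Nat.pair n j
  · simp [pieceMul, hs, abs_mul]
  · simp [indicator_of_notMem (show s ∉ idx ⁻¹' {Nat.pair n j} from hs)]

lemma emarcNorm_pieceMul {x : ℕ → ℝ} (hx : BddAbove (range fun n => |x n|)) :
    emarcNorm φ (pieceMul g idx x) = ENNReal.ofReal (⨆ n, |x n|) := by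
  have sup_nonneg : 0 ≤ ⨆ n, |x n| := Real.iSup_nonneg fun n => abs_nonneg _
  have norm_le : emarcNorm φ (pieceMul g idx x) ≤ ENNReal.ofReal (⨆ n, |x n|) :=
    calc emarcNorm φ (pieceMul g idx x) ≤ emarcNorm φ fun s => (⨆ n, |x n|) * g s := by
          refine emarcNorm_mono (ae_of_all _ fun s => ?_)
          rw [pieceMul, abs_mul, abs_mul, abs_of_nonneg sup_nonneg]
          exact mul_le_mul_of_nonneg_right (le_ciSup hx _) (abs_nonneg _)
      _ ≤ ENNReal.ofReal (⨆ n, |x n|) := by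
          rw [emarcNorm_const_mul sup_nonneg]
          exact mul_le_of_le_one_right' hg.norm_le_one
  have norm_ne_top := ne_top_of_le_ne_top ENNReal.ofReal_ne_top norm_le
  exact norm_le.antisymm (ENNReal.ofReal_le_of_le_toReal (ciSup_le fun n =>
    (ENNReal.ofReal_le_iff_le_toReal norm_ne_top).1 (hg.abs_le_emarcNorm_pieceMul x n)))

lemma hasLatticeCopyLinf (hφ : QuasiConcave φ) : HasLatticeCopyLinf (marcMem φ) (marcNorm φ) := by
  refine ⟨pieceMul g idx, fun x y => ?_, fun c x => ?_, fun x => ?_, fun x hx => ?_⟩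
  · ext s
    simp only [pieceMul, Pi.add_apply, add_mul]
  · ext s
    simp only [pieceMul, Pi.smul_apply, smul_eq_mul, mul_assoc]
  · ext s
    simp only [pieceMul, abs_mul, abs_of_nonneg (hg.nonneg s)]
  · have norm_eq := hg.emarcNorm_pieceMul hx
    have norm_ne_top := norm_eq.trans_ne ENNReal.ofReal_ne_top
    refine ⟨marcMem_of_emarcNorm_ne_top hφ (hg.aemeasurable_pieceMul x) norm_ne_top, ?_⟩
    rw [marcNorm_eq_toReal hφ (hg.aemeasurable_pieceMul x) norm_ne_top, norm_eq,
      ENNReal.toReal_ofReal (Real.iSup_nonneg fun n => abs_nonneg _)]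

lemma emarcNorm_eq_one : emarcNorm φ g = 1 := by
  refine hg.norm_le_one.antisymm (le_of_tendsto' hg.tendsto_piece fun k => emarcNorm_mono ?_)
  exact ae_of_all _ fun s => norm_indicator_le_norm_self g s

variable (hφ : QuasiConcave φ) {h : ℝ → ℝ} (hh : h ∈ ocSet μ₀ (marcMem φ) (marcNorm φ))
  (h_fin : emarcNorm φ h ≠ ⊤)
include hφ hh h_fin

lemma tendsto_emarcNorm_indicator :
    Tendsto (fun k => emarcNorm φ ((idx ⁻¹' Ici k).indicator fun s => |h s|)) atTop (𝓝 0) := by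
  refine tendsto_emarcNorm_of_antitone hφ hh (fun k => ?_)
    (fun k s => indicator_nonneg (fun _ _ => abs_nonneg _) s)
    (fun s => indicator_le_self' (fun _ _ => abs_nonneg _) s) (fun s i j hij => ?_) (fun s => ?_) ?_
  · exact (measurable_norm.comp_aemeasurable hh.1.1).indicator₀
      (hg.aemeasurable_idx.nullMeasurable (Ici k).to_countable.measurableSet)
  · exact indicator_le_indicator_of_subset (preimage_mono (Ici_subset_Ici.2 hij))
      (fun _ => abs_nonneg _) s
  · refine tendsto_const_nhds.congr' ?_
    filter_upwards [eventually_gt_atTop (idx s)] with k hk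
    have notMem : s ∉ idx ⁻¹' Ici k := notMem_Ici.2 hk
    exact (indicator_of_notMem notMem fun s => |h s|).symm
  · refine ne_top_of_le_ne_top h_fin (emarcNorm_mono (ae_of_all _ fun s => ?_))
    exact (norm_indicator_le_norm_self (fun s => |h s|) s).trans_eq (abs_abs (h s))

lemma ofReal_le_emarcNorm_sub {a : ℝ} (ha0 : 0 < a) (ha1 : a < 1) :
    ENNReal.ofReal a ≤ emarcNorm φ (g - h) := by
  have split (k : ℕ) : emarcNorm φ ((idx ⁻¹' {k}).indicator g) ≤
      ENNReal.ofReal a⁻¹ * emarcNorm φ (g - h) + ENNReal.ofReal (1 - a)⁻¹ *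
        emarcNorm φ ((idx ⁻¹' Ici k).indicator fun s => |h s|) := by
    refine emarcNorm_le_add ha0 (sub_pos.2 ha1) (add_sub_cancel a 1).le fun s => ?_
    by_cases hs : idx s = k
    · rw [indicator_of_mem (show s ∈ idx ⁻¹' {k} from hs),
        indicator_of_mem (show s ∈ idx ⁻¹' Ici k from hs.ge), abs_abs]
      simpa only [Pi.sub_apply, sub_add_cancel] using abs_add_le (g s - h s) (h s)
    · rw [indicator_of_notMem (show s ∉ idx ⁻¹' {k} from hs), abs_zero]
      positivity
  have bound_lim := (ENNReal.Tendsto.const_mul (hg.tendsto_emarcNorm_indicator hφ hh h_fin)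
    (Or.inr (ENNReal.ofReal_ne_top (r := (1 - a)⁻¹)))).const_add
      (ENNReal.ofReal a⁻¹ * emarcNorm φ (g - h))
  rw [mul_zero, add_zero] at bound_lim
  calc ENNReal.ofReal a = ENNReal.ofReal a * 1 := (mul_one _).symm
    _ ≤ ENNReal.ofReal a * (ENNReal.ofReal a⁻¹ * emarcNorm φ (g - h)) :=
      mul_le_mul_right (le_of_tendsto_of_tendsto' hg.tendsto_piece bound_lim split) _
    _ = emarcNorm φ (g - h) := by
      rw [← mul_assoc, ← ENNReal.ofReal_mul ha0.le, mul_inv_cancel₀ ha0.ne', ENNReal.ofReal_one,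
        one_mul]

lemma one_le_emarcNorm_sub : 1 ≤ emarcNorm φ (g - h) := by
  have ofReal_lim : Tendsto ENNReal.ofReal (𝓝[<] 1) (𝓝 1) :=
    (ENNReal.continuous_ofReal.tendsto' 1 1 ENNReal.ofReal_one).mono_left nhdsWithin_le_nhds
  refine le_of_tendsto ofReal_lim ?_
  filter_upwards [Ioo_mem_nhdsLT zero_lt_one] with a ha
  exact hg.ofReal_le_emarcNorm_sub hφ hh h_fin ha.1 ha.2

lemma one_le_marcNorm_sub : 1 ≤ marcNorm φ (g - h) := by
  have sub_ne_top : emarcNorm φ (g - h) ≠ ⊤ := by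
    refine ne_top_of_le_ne_top ?_ (emarcNorm_le_add one_half_pos one_half_pos (add_halves _).le
      fun s => abs_sub (g s) (h s))
    exact ENNReal.add_ne_top.2 ⟨ENNReal.mul_ne_top ENNReal.ofReal_ne_top
      (ne_top_of_le_ne_top ENNReal.one_ne_top hg.norm_le_one),
      ENNReal.mul_ne_top ENNReal.ofReal_ne_top h_fin⟩
  rw [marcNorm_eq_toReal hφ (hg.aemeasurable.sub hh.1.1) sub_ne_top]
  exact (ENNReal.ofReal_le_iff_le_toReal sub_ne_top).1
    (ENNReal.ofReal_one.trans_le (hg.one_le_emarcNorm_sub hφ hh h_fin))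

end HasUnitPieces

lemma zero_mem_ocSet {φ : ℝ → ℝ} (hφ : QuasiConcave φ) :
    (0 : ℝ → ℝ) ∈ ocSet μ₀ (marcMem φ) (marcNorm φ) := by
  have norm_zero_ne_top : emarcNorm φ 0 ≠ ⊤ :=
    (emarcNorm_eq_zero_of_ae_eq_zero (ae_of_all _ fun _ => rfl)).trans_ne ENNReal.zero_ne_top
  refine ⟨marcMem_of_emarcNorm_ne_top hφ aemeasurable_const norm_zero_ne_top,
    fun u u_mem u_bounds _ _ => tendsto_const_nhds.congr fun n => ?_⟩
  have norm_eq_zero : emarcNorm φ (u n) = 0 := by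
    refine emarcNorm_eq_zero_of_ae_eq_zero ((u_bounds n).mono fun x hx => ?_)
    exact (hx.2.trans_eq abs_zero).antisymm hx.1
  rw [marcNorm_eq_toReal hφ (u_mem n).1 (norm_eq_zero.trans_ne ENNReal.zero_ne_top), norm_eq_zero,
    ENNReal.toReal_zero]

namespace HasUnitPieces

variable {φ g : ℝ → ℝ} {idx : ℝ → ℕ} (hg : HasUnitPieces φ g idx) (hφ : QuasiConcave φ)
include hg hφ

lemma mem : marcMem φ g :=
  marcMem_of_emarcNorm_ne_top hφ hg.aemeasurable (hg.emarcNorm_eq_one.trans_ne ENNReal.one_ne_top)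

lemma marcNorm_eq_one : marcNorm φ g = 1 := by
  rw [marcNorm_eq_toReal hφ hg.aemeasurable (hg.emarcNorm_eq_one.trans_ne ENNReal.one_ne_top),
    hg.emarcNorm_eq_one, ENNReal.toReal_one]

lemma distIn_ocSet (hlim : Tendsto (fun t => t / φ t) (𝓝[>] 0) (𝓝 0)) :
    distIn (marcNorm φ) g (ocSet μ₀ (marcMem φ) (marcNorm φ)) = 1 := by
  refine IsLeast.csInf_eq ⟨⟨0, zero_mem_ocSet hφ, ?_⟩, ?_⟩
  · simp only [sub_zero, hg.marcNorm_eq_one hφ]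
  · rintro _ ⟨h, hh, rfl⟩
    exact hg.one_le_marcNorm_sub hφ hh (emarcNorm_ne_top_of_mem_ocSet hφ hh hlim)

end HasUnitPieces

/-- Let `φ` be a quasi-concave function on `(0,∞)` with `lim_{t→0⁺} t/φ(t) = 0`. Then the
Marcinkiewicz space `M_φ` contains a function `g` with `‖g‖_{M_φ} = 1` and
`dist (g, (M_φ)_a) = 1`; consequently `M_φ` contains a lattice isometric copy of `ℓ∞`. -/
theorem marcinkiewicz_contains_linf (phi : ℝ → ℝ)
    (h0 : phi 0 = 0) (hpos : ∀ t, 0 < t → 0 < phi t)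
    (hmono : MonotoneOn phi (Set.Ioi (0 : ℝ)))
    (hquasi : AntitoneOn (fun t => phi t / t) (Set.Ioi (0 : ℝ)))
    (hlim : Tendsto (fun t => t / phi t) (𝓝[>] (0 : ℝ)) (𝓝 0)) :
    (∃ g : ℝ → ℝ, marcMem phi g ∧ marcNorm phi g = 1 ∧
      distIn (marcNorm phi) g
        (ocSet (volume.restrict (Set.Ioi (0 : ℝ))) (marcMem phi) (marcNorm phi)) = 1) ∧
    HasLatticeCopyLinf (marcMem phi) (marcNorm phi) := by
  have hφ : QuasiConcave phi := ⟨hpos, hmono, hquasi⟩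
  obtain ⟨g, idx, hg⟩ := exists_hasUnitPieces hφ hlim
  exact ⟨⟨g, hg.mem hφ, hg.marcNorm_eq_one hφ, hg.distIn_ocSet hφ hlim⟩, hg.hasLatticeCopyLinf hφ⟩
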